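/- arXiv:2412.20539 — 9 statements merged into one kernel-verified Lean document; each statement's English description precedes it below -/
import Mathlib

section
/- Let (X,d) be a finite ultrametric space with at least two points. Then the relation on X defined by x ~ y if and only if d(x,y) < diam X is an equivalence relation on X having at least two equivalence classes; consequently, any two points lying in different equivalence classes are at distance exactly diam X (i.e., the diametrical graph of X, whose edges join pairs of points at distance diam X, is a complete multipartite graph). -/
/-- A semimetric on `X`: nonnegative, symmetric, and vanishing exactly on the diagonal. -/
def IsSemimetric {X : Type*} (d : X → X → ℝ) : Prop :=
  (∀ x y, 0 ≤ d x y) ∧ (∀ x y, d x y = d y x) ∧ (∀ x y, d x y = 0 ↔ x = y)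

/-- An ultrametric on `X`: a semimetric satisfying the strong triangle inequality. -/
def IsUltrametric {X : Type*} (d : X → X → ℝ) : Prop :=
  IsSemimetric d ∧ ∀ x y z, d x y ≤ max (d x z) (d z y)

/-- The spectrum of a semimetric space: the set of values taken by the distance. -/
def spec {X : Type*} (d : X → X → ℝ) : Set ℝ := {r | ∃ x y, d x y = r}

/-- `B` is a ball of `(X,d)`: `B = {x | d x t ≤ r}` for some center `t` and radius `r ≥ 0`. -/
def IsBall {X : Type*} (d : X → X → ℝ) (B : Set X) : Prop :=
  ∃ (t : X) (r : ℝ), 0 ≤ r ∧ B = {x | d x t ≤ r}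

/-- `F : X → Y` is ball-preserving: images of balls are balls and preimages of balls are balls. -/
def IsBallPreserving {X Y : Type*} (d : X → X → ℝ) (ρ : Y → Y → ℝ) (F : X → Y) : Prop :=
  (∀ B : Set X, IsBall d B → IsBall ρ (F '' B)) ∧
  (∀ B : Set Y, IsBall ρ B → IsBall d (F ⁻¹' B))

/-- `Φ` is a weak similarity from `(X,d)` to `(Y,ρ)` with scaling function `f`:
`Φ` is a bijection and `f` is a strictly increasing bijection from `spec d` onto `spec ρ`
with `f (d x y) = ρ (Φ x) (Φ y)` for all `x y`. -/
def IsWeakSimilarity {X Y : Type*} (d : X → X → ℝ) (ρ : Y → Y → ℝ)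
    (Φ : X → Y) (f : ℝ → ℝ) : Prop :=
  Function.Bijective Φ ∧ Set.BijOn f (spec d) (spec ρ) ∧
  StrictMonoOn f (spec d) ∧ ∀ x y, f (d x y) = ρ (Φ x) (Φ y)

/-- `X` and `Y` are weakly similar: some weak similarity `Φ : X → Y` exists. -/
def WeaklySimilar {X Y : Type*} (d : X → X → ℝ) (ρ : Y → Y → ℝ) : Prop :=
  ∃ (Φ : X → Y) (f : ℝ → ℝ), IsWeakSimilarity d ρ Φ f

/-- `B₂` covers `B₁` in the ballean of `(X,d)` ordered by inclusion:
both are balls, `B₁ ⊊ B₂`, and no ball lies strictly between them.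
These covering pairs are exactly the arcs of the Hasse diagram of the ballean. -/
def BallCovers {X : Type*} (d : X → X → ℝ) (B₁ B₂ : Set X) : Prop :=
  IsBall d B₁ ∧ IsBall d B₂ ∧ B₁ ⊂ B₂ ∧
  ∀ B : Set X, IsBall d B → B₁ ⊆ B → B ⊆ B₂ → B = B₁ ∨ B = B₂

/-- The diameter of a subset `A` of a semimetric space `(X,d)`. -/
noncomputable def setDiam {X : Type*} (d : X → X → ℝ) (A : Set X) : ℝ :=
  sSup {r | ∃ x ∈ A, ∃ y ∈ A, d x y = r}

/-- In a finite ultrametric space with at least two points, the relation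
`x ~ y ↔ d x y < diam X` is an equivalence relation with at least two classes, and any two
points in different classes are at distance exactly `diam X` (so the diametrical graph is
complete multipartite). -/
theorem stmt0 {X : Type*} [Finite X] (d : X → X → ℝ) (hd : IsUltrametric d)
    (hcard : ∃ x y : X, x ≠ y) (D : ℝ)
    (hD : IsGreatest (spec d) D) :
    Equivalence (fun x y : X => d x y < D) ∧
    (∃ x y : X, ¬ d x y < D) ∧
    (∀ x y : X, ¬ d x y < D → d x y = D) := by
  obtain ⟨⟨hnn, hsymm, hzero⟩, hu⟩ := hd
  obtain ⟨⟨a, b, hab⟩, hub⟩ := hD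
  have hle : ∀ x y, d x y ≤ D := fun x y => hub ⟨x, y, rfl⟩
  have hpos : 0 < D := by
    obtain ⟨x, y, hxy⟩ := hcard
    have h : d x y ≠ 0 := fun h => hxy ((hzero x y).1 h)
    exact lt_of_lt_of_le (lt_of_le_of_ne (hnn x y) h.symm) (hle x y)
  refine ⟨⟨fun x => ?_, fun {x y} h => ?_, fun {x y z} h1 h2 => ?_⟩, ⟨a, b, ?_⟩, fun x y h => ?_⟩
  · have h : d x x = 0 := (hzero x x).2 rfl
    show d x x < D
    rw [h]
    exact hpos
  · show d y x < D
    rw [hsymm]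
    exact h
  · exact lt_of_le_of_lt (hu x z y) (max_lt h1 h2)
  · rw [hab]
    exact lt_irrefl D
  · exact le_antisymm (hle x y) (not_lt.1 h)
end

section
/- Let X be a finite nonempty ultrametric space. Then the following two statements are equivalent: (i) for every finite nonempty ultrametric space Y, if there exists a bijective ball-preserving mapping from X to Y, then X and Y are weakly similar; (ii) the balls of X containing more than one point are linearly ordered by inclusion (i.e., for any two balls B₁, B₂ of X each containing at least two points, B₁ ⊆ B₂ or B₂ ⊆ B₁). -/
lemma ball_min {X : Type*} {d : X → X → ℝ} (hd : IsUltrametric d) {B : Set X} (hB : IsBall d B)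
    {x y z : X} (hx : x ∈ B) (hy : y ∈ B) (h : d z x ≤ d x y) : z ∈ B := by
  obtain ⟨⟨h0, hs, he⟩, hu⟩ := hd
  obtain ⟨t, r, hr, rfl⟩ := hB
  simp only [Set.mem_ofPred_eq] at *
  have h1 := hu z t x
  have h2 := hu x y t
  rw [hs t y] at h2
  have h3 : d x y ≤ r := h2.trans (max_le hx hy)
  exact h1.trans (max_le (h.trans h3) hx)

/-- The smallest ball containing two points. -/
lemma isBall_P {X : Type*} {d : X → X → ℝ} (hd : IsUltrametric d) (x y : X) :
    IsBall d {z | d z x ≤ d x y} := ⟨x, d x y, hd.1.1 x y, rfl⟩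

lemma diam_P {X : Type*} {d : X → X → ℝ} (hd : IsUltrametric d) {x y z w : X}
    (hz : d z x ≤ d x y) (hw : d w x ≤ d x y) : d z w ≤ d x y := by
  have := hd.2 z w x
  rw [hd.1.2.1 x w] at this
  exact this.trans (max_le hz hw)

lemma ball_eq_P {X : Type*} [Finite X] {d : X → X → ℝ} (hd : IsUltrametric d) {t : X} {r : ℝ}
    (hr : 0 ≤ r) : ∃ z, ∀ x, d x t ≤ r ↔ d x t ≤ d z t := by
  have hne : ({x | d x t ≤ r} : Set X).Nonempty := ⟨t, by
    simp only [Set.mem_ofPred_eq]; rwa [(hd.1.2.2 t t).2 rfl]⟩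
  obtain ⟨z, hz, hm⟩ := Set.exists_max_image {x | d x t ≤ r} (fun x => d x t) (Set.toFinite _) hne
  exact ⟨z, fun x => ⟨fun h => hm x h, fun h => h.trans hz⟩⟩

lemma same_balls {X : Type*} [Finite X] {d ρ : X → X → ℝ} (hd : IsUltrametric d)
    (hρ : IsUltrametric ρ) (h : ∀ x y z, d x y ≤ d z y ↔ ρ x y ≤ ρ z y) {B : Set X}
    (hB : IsBall d B) : IsBall ρ B := by
  obtain ⟨t, r, hr, rfl⟩ := hB
  obtain ⟨z, hz⟩ := ball_eq_P hd hr (t := t)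
  refine ⟨t, ρ z t, hρ.1.1 z t, ?_⟩
  ext x
  simp only [Set.mem_ofPred_eq]
  rw [hz, h]

open Classical in
/-- The smallest ball containing two points, as a finset. -/
noncomputable def PB {X : Type*} [Fintype X] (d : X → X → ℝ) (x y : X) : Finset X :=
  Finset.univ.filter (fun z => d z x ≤ d x y)

open Classical in
/-- The ultrametric obtained from weights on points. -/
noncomputable def rhoW {X : Type*} [Fintype X] (d : X → X → ℝ) (w : X → ℕ) (x y : X) : ℝ :=
  if x = y then 0 else ((∑ z ∈ PB d x y, w z : ℕ) : ℝ)

section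
variable {X : Type*} [Fintype X] {d : X → X → ℝ} {w : X → ℕ}

lemma mem_PB {x y z : X} : z ∈ PB d x y ↔ d z x ≤ d x y := by simp [PB]

lemma PB_symm (hd : IsUltrametric d) (x y : X) : PB d x y = PB d y x := by
  have key : ∀ x y z : X, d z x ≤ d x y → d z y ≤ d y x := by
    intro x y z h
    rw [hd.1.2.1 y x]
    exact (hd.2 z y x).trans (max_le h le_rfl)
  ext z
  rw [mem_PB, mem_PB]
  exact ⟨key _ _ _, key _ _ _⟩

lemma left_mem_PB (hd : IsUltrametric d) (x y : X) : x ∈ PB d x y := by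
  rw [mem_PB, (hd.1.2.2 x x).2 rfl]; exact hd.1.1 x y

lemma rhoW_pos (hd : IsUltrametric d) (hw : ∀ x, 0 < w x) {x y : X} (h : x ≠ y) :
    0 < rhoW d w x y := by
  rw [rhoW, if_neg h, Nat.cast_pos]
  exact Finset.sum_pos (fun i _ => hw i) ⟨x, left_mem_PB hd x y⟩

lemma rhoW_self (x : X) : rhoW d w x x = 0 := by simp [rhoW]

lemma rhoW_nonneg (x y : X) : 0 ≤ rhoW d w x y := by
  rw [rhoW]; split_ifs <;> positivity

lemma rhoW_symm (hd : IsUltrametric d) (x y : X) : rhoW d w x y = rhoW d w y x := by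
  rw [rhoW, rhoW, PB_symm hd x y]
  by_cases h : x = y
  · rw [if_pos h, if_pos h.symm]
  · rw [if_neg h, if_neg (Ne.symm h)]

lemma rhoW_mono (hd : IsUltrametric d) (hw : ∀ x, 0 < w x) (x y z : X) :
    d x y ≤ d x z ↔ rhoW d w x y ≤ rhoW d w x z := by
  constructor
  · intro h
    by_cases hxy : x = y
    · subst hxy; rw [rhoW_self]; exact rhoW_nonneg _ _
    have hxz : x ≠ z := by
      rintro rfl
      rw [(hd.1.2.2 x x).2 rfl] at h
      exact hxy ((hd.1.2.2 x y).1 (le_antisymm h (hd.1.1 x y)))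
    rw [rhoW, rhoW, if_neg hxy, if_neg hxz, Nat.cast_le]
    apply Finset.sum_le_sum_of_subset
    intro u hu
    rw [mem_PB] at *
    exact hu.trans h
  · intro h
    by_contra! hlt
    refine absurd h (not_le.2 ?_)
    have hxy : x ≠ y := by
      rintro rfl
      rw [(hd.1.2.2 x x).2 rfl] at hlt
      exact absurd hlt (not_lt.2 (hd.1.1 x z))
    by_cases hxz : x = z
    · subst hxz; rw [rhoW_self]; exact rhoW_pos hd hw hxy
    rw [rhoW, rhoW, if_neg hxy, if_neg hxz, Nat.cast_lt]
    refine Finset.sum_lt_sum_of_subset (i := y) ?_ ?_ ?_ (hw y) (fun j _ _ => Nat.zero_le _)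
    · intro u hu
      rw [mem_PB] at *
      exact hu.trans hlt.le
    · rw [mem_PB, hd.1.2.1 y x]
    · rw [mem_PB, hd.1.2.1 y x]; exact not_le.2 hlt

lemma rhoW_ultra (hd : IsUltrametric d) (hw : ∀ x, 0 < w x) : IsUltrametric (rhoW d w) := by
  refine ⟨⟨rhoW_nonneg, rhoW_symm hd, fun x y => ⟨fun h => ?_, ?_⟩⟩, fun x y z => ?_⟩
  · by_contra hne
    exact (rhoW_pos hd hw hne).ne' h
  · rintro rfl; exact rhoW_self x
  · rcases le_max_iff.1 (hd.2 x y z) with h | h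
    · exact le_max_of_le_left ((rhoW_mono hd hw _ _ _).1 h)
    · apply le_max_of_le_right
      rw [rhoW_symm hd x y, rhoW_symm hd z y]
      rw [hd.1.2.1 x y, hd.1.2.1 z y] at h
      exact (rhoW_mono hd hw _ _ _).1 h

lemma rhoW_bp (hd : IsUltrametric d) (hw : ∀ x, 0 < w x) :
    IsBallPreserving d (rhoW d w) (id : X → X) := by
  have hρ := rhoW_ultra hd hw
  have h : ∀ x y z, d x y ≤ d z y ↔ rhoW d w x y ≤ rhoW d w z y := by
    intro x y z
    rw [hd.1.2.1 x y, hd.1.2.1 z y, rhoW_symm hd x y, rhoW_symm hd z y]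
    exact rhoW_mono hd hw _ _ _
  refine ⟨fun B hB => ?_, fun B hB => ?_⟩
  · rw [Set.image_id]; exact same_balls hd hρ h hB
  · rw [Set.preimage_id]; exact same_balls hρ hd (fun x y z => (h x y z).symm) hB

lemma ball_PB (hd : IsUltrametric d) {B : Set X} (hB : IsBall d B) (hn : B.Nontrivial) :
    ∃ x y, x ≠ y ∧ B = (PB d x y : Set X) := by
  obtain ⟨t, r, hr, rfl⟩ := hB
  obtain ⟨z, hz⟩ := ball_eq_P hd hr (t := t)
  have hB : {x | d x t ≤ r} = (PB d t z : Set X) := by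
    ext x
    simp only [Set.mem_ofPred_eq, Finset.mem_coe, mem_PB]
    rw [hz, hd.1.2.1 t z]
  refine ⟨t, z, ?_, hB⟩
  rintro rfl
  obtain ⟨a, ha, b, hb, hab⟩ := hn
  simp only [Set.mem_ofPred_eq] at ha hb
  rw [hz, (hd.1.2.2 t t).2 rfl] at ha hb
  have h1 := (hd.1.2.2 a t).1 (le_antisymm ha (hd.1.1 _ _))
  have h2 := (hd.1.2.2 b t).1 (le_antisymm hb (hd.1.1 _ _))
  exact hab (h1.trans h2.symm)

end

lemma balls_nested {X : Type*} {d : X → X → ℝ} (hd : IsUltrametric d) {A B : Set X}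
    (hA : IsBall d A) (hB : IsBall d B) {u : X} (ha : u ∈ A) (hb : u ∈ B) : A ⊆ B ∨ B ⊆ A := by
  by_contra! hh
  obtain ⟨h1, h2⟩ := hh
  obtain ⟨a, haA, haB⟩ := Set.not_subset.1 h1
  obtain ⟨b, hbB, hbA⟩ := Set.not_subset.1 h2
  rcases le_total (d a u) (d b u) with h | h
  · exact haB (ball_min hd hB hb hbB (by rwa [hd.1.2.1 u b]))
  · exact hbA (ball_min hd hA ha haA (by rwa [hd.1.2.1 u a]))

lemma ws_ncard {X : Type*} {d ρ : X → X → ℝ} (h : WeaklySimilar d ρ) :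
    (spec d).ncard = (spec ρ).ncard := by
  obtain ⟨Φ, f, _, hf, _⟩ := h
  rw [← hf.image_eq, Set.ncard_image_of_injOn hf.injOn]

lemma spec_fin {X : Type*} [Finite X] (d : X → X → ℝ) : (spec d).Finite := by
  have : spec d = Set.range (fun p : X × X => d p.1 p.2) := by
    ext r; simp [spec]
  rw [this]; exact Set.finite_range _

lemma fwd {X : Type} [Finite X] [Nonempty X] (d : X → X → ℝ) (hd : IsUltrametric d)
    (H : ∀ (Y : Type) (_ : Finite Y) (_ : Nonempty Y) (ρ : Y → Y → ℝ),
        IsUltrametric ρ →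
        (∃ F : X → Y, Function.Bijective F ∧ IsBallPreserving d ρ F) →
        WeaklySimilar d ρ) (B₁ B₂ : Set X) (h1 : IsBall d B₁) (h2 : IsBall d B₂)
    (n1 : B₁.Nontrivial) (n2 : B₂.Nontrivial) : B₁ ⊆ B₂ ∨ B₂ ⊆ B₁ := by
  classical
  by_contra hcon
  have := Fintype.ofFinite X
  obtain ⟨x, y, hxy, rfl⟩ := ball_PB hd h1 n1
  obtain ⟨x', y', hxy', rfl⟩ := ball_PB hd h2 n2
  have hdis : Disjoint (PB d x y) (PB d x' y') := by
    rw [Finset.disjoint_left]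
    intro u hu hu'
    exact hcon (balls_nested hd h1 h2 hu hu')
  have key : ∀ w : X → ℕ, (∀ x, 0 < w x) → (spec d).ncard = (spec (rhoW d w)).ncard := by
    intro w hw
    exact ws_ncard (H X inferInstance inferInstance (rhoW d w) (rhoW_ultra hd hw)
      ⟨id, Function.bijective_id, rhoW_bp hd hw⟩)
  let e := Fintype.equivFin X
  let w1 : X → ℕ := fun x => 2 ^ (e x : ℕ)
  let w2 : X → ℕ := fun u => if u ∈ PB d x y then (PB d x' y').card else
    if u ∈ PB d x' y' then (PB d x y).card else 1
  have p1 : ∀ x, 0 < w1 x := fun x => by positivity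
  have c1 : 0 < (PB d x y).card := Finset.card_pos.2 ⟨x, left_mem_PB hd _ _⟩
  have c2 : 0 < (PB d x' y').card := Finset.card_pos.2 ⟨x', left_mem_PB hd _ _⟩
  have p2 : ∀ x, 0 < w2 x := fun u => by
    simp only [w2]; split_ifs <;> omega
  have hc := (key w1 p1).symm.trans (key w2 p2)
  have hinjS : ∀ A B : Finset X, ∑ z ∈ A, w1 z = ∑ z ∈ B, w1 z → A = B := by
    intro A B h
    let em : X ↪ ℕ := e.toEmbedding.trans Fin.valEmbedding
    have hA : ∀ A : Finset X, ∑ z ∈ A, w1 z = ∑ i ∈ A.map em, 2 ^ i := by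
      intro A; rw [Finset.sum_map]; rfl
    rw [hA, hA] at h
    exact Finset.map_injective em (Finset.geomSum_injective le_rfl h)
  have hPB : ∀ a b a' b', a ≠ b → a' ≠ b' → rhoW d w1 a b = rhoW d w1 a' b' →
      PB d a b = PB d a' b' := by
    intro a b a' b' hab hab' h
    rw [rhoW, rhoW, if_neg hab, if_neg hab', Nat.cast_inj] at h
    exact hinjS _ _ h
  have wd : ∀ a b a' b', rhoW d w1 a b = rhoW d w1 a' b' →
      rhoW d w2 a b = rhoW d w2 a' b' := by
    intro a b a' b' h
    by_cases hab : a = b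
    · subst hab
      by_cases hab' : a' = b'
      · subst hab'; rw [rhoW_self, rhoW_self]
      · rw [rhoW_self] at h
        exact absurd h (rhoW_pos hd p1 hab').ne
    · by_cases hab' : a' = b'
      · subst hab'
        rw [rhoW_self] at h
        exact absurd h (rhoW_pos hd p1 hab).ne'
      · rw [rhoW, rhoW, if_neg hab, if_neg hab', hPB _ _ _ _ hab hab' h]
  choose p q hpq using fun r : spec (rhoW d w1) => r.2
  let g : ℝ → ℝ := fun r => if h : r ∈ spec (rhoW d w1) then rhoW d w2 (p ⟨r, h⟩) (q ⟨r, h⟩) else 0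
  have hg : ∀ a b, g (rhoW d w1 a b) = rhoW d w2 a b := by
    intro a b
    have hm : rhoW d w1 a b ∈ spec (rhoW d w1) := ⟨a, b, rfl⟩
    simp only [g, dif_pos hm]
    exact wd _ _ _ _ (hpq ⟨_, hm⟩)
  have him : g '' spec (rhoW d w1) = spec (rhoW d w2) := by
    ext r
    constructor
    · rintro ⟨_, ⟨a, b, rfl⟩, rfl⟩
      exact ⟨a, b, (hg a b).symm⟩
    · rintro ⟨a, b, rfl⟩
      exact ⟨_, ⟨a, b, rfl⟩, hg a b⟩
  have hinj : Set.InjOn g (spec (rhoW d w1)) :=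
    Set.injOn_of_ncard_image_eq (by rw [him, hc]) (spec_fin _)
  have s1 : ∑ z ∈ PB d x y, w2 z = (PB d x y).card * (PB d x' y').card := by
    rw [Finset.sum_congr rfl (g := fun _ => (PB d x' y').card)]
    · simp
    · intro u hu; simp only [w2, if_pos hu]
  have s2 : ∑ z ∈ PB d x' y', w2 z = (PB d x y).card * (PB d x' y').card := by
    rw [Finset.sum_congr rfl (g := fun _ => (PB d x y).card)]
    · simp [mul_comm]
    · intro u hu
      simp only [w2, if_pos hu, if_neg (Finset.disjoint_right.1 hdis hu)]
  have heq : rhoW d w2 x y = rhoW d w2 x' y' := by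
    rw [rhoW, rhoW, if_neg hxy, if_neg hxy', s1, s2]
  rw [← hg, ← hg] at heq
  have h3 := hPB _ _ _ _ hxy hxy' (hinj ⟨_, _, rfl⟩ ⟨_, _, rfl⟩ heq)
  apply hcon
  left
  rw [h3]

lemma bwd {X Y : Type} (d : X → X → ℝ) (hd : IsUltrametric d)
    (H : ∀ B₁ B₂ : Set X, IsBall d B₁ → IsBall d B₂ →
        B₁.Nontrivial → B₂.Nontrivial → B₁ ⊆ B₂ ∨ B₂ ⊆ B₁)
    (ρ : Y → Y → ℝ) (hρ : IsUltrametric ρ) (F : X → Y) (hF : Function.Bijective F)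
    (hb : IsBallPreserving d ρ F) : WeaklySimilar d ρ := by
  have K : ∀ x y z, d z x ≤ d x y ↔ ρ (F z) (F x) ≤ ρ (F x) (F y) := by
    intro x y z
    constructor
    · intro h
      have := ball_min hd (hb.2 _ (isBall_P hρ (F x) (F y))) (x := x) (y := y) (z := z)
        (by simp only [Set.mem_preimage, Set.mem_ofPred_eq]
            rw [(hρ.1.2.2 _ _).2 rfl]; exact hρ.1.1 _ _)
        (by simp only [Set.mem_preimage, Set.mem_ofPred_eq]
            rw [hρ.1.2.1 (F y)]) h
      exact this
    · intro h
      have := ball_min hρ (hb.1 _ (isBall_P hd x y)) (x := F x) (y := F y) (z := F z)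
        (Set.mem_image_of_mem F (by
            simp only [Set.mem_ofPred_eq]
            rw [(hd.1.2.2 _ _).2 rfl]; exact hd.1.1 _ _))
        (Set.mem_image_of_mem F (by
            simp only [Set.mem_ofPred_eq]
            rw [hd.1.2.1 y])) h
      obtain ⟨z', hz', he⟩ := this
      rw [← hF.1 he]; exact hz'
  have self_mem : ∀ x y, d x x ≤ d x y := fun x y => by
    rw [(hd.1.2.2 _ _).2 rfl]; exact hd.1.1 _ _
  have C : ∀ x y z w, x ≠ y → z ≠ w → d x y ≤ d z w → d x z ≤ d z w ∧ d y z ≤ d z w := by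
    intro x y z w hxy hzw h
    have nt : ∀ x y : X, x ≠ y → ({u | d u x ≤ d x y} : Set X).Nontrivial := fun x y h =>
      ⟨x, self_mem x y, y, by simp only [Set.mem_ofPred_eq]; rw [hd.1.2.1 y x], h⟩
    rcases H _ _ (isBall_P hd x y) (isBall_P hd z w) (nt x y hxy) (nt z w hzw) with hs | hs
    · exact ⟨hs (self_mem x y), hs (by simp only [Set.mem_ofPred_eq]; rw [hd.1.2.1 y x])⟩
    · have hz : d z x ≤ d x y := hs (self_mem z w)
      have h1 : d x z ≤ d z w := by rw [hd.1.2.1 x z]; exact hz.trans h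
      refine ⟨h1, ?_⟩
      refine (hd.2 y z x).trans (max_le ?_ h1)
      rw [hd.1.2.1 y x]; exact h
  have M : ∀ x y z w, d x y ≤ d z w → ρ (F x) (F y) ≤ ρ (F z) (F w) := by
    intro x y z w h
    by_cases hxy : x = y
    · subst hxy; rw [(hρ.1.2.2 _ _).2 rfl]; exact hρ.1.1 _ _
    have hzw : z ≠ w := by
      rintro rfl
      rw [(hd.1.2.2 z z).2 rfl] at h
      exact hxy ((hd.1.2.2 x y).1 (le_antisymm h (hd.1.1 x y)))
    obtain ⟨h1, h2⟩ := C x y z w hxy hzw h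
    exact diam_P hρ ((K _ _ _).1 h1) ((K _ _ _).1 h2)
  have S : ∀ z w x y, d z w < d x y → ρ (F z) (F w) < ρ (F x) (F y) := by
    intro z w x y h
    have hxy : x ≠ y := by
      rintro rfl
      rw [(hd.1.2.2 x x).2 rfl] at h
      exact absurd h (not_lt.2 (hd.1.1 _ _))
    by_cases hzw : z = w
    · subst hzw
      rw [(hρ.1.2.2 _ _).2 rfl]
      refine lt_of_le_of_ne (hρ.1.1 _ _) (fun h0 => hxy (hF.1 ((hρ.1.2.2 _ _).1 h0.symm)))
    obtain ⟨h1, h2⟩ := C z w x y hzw hxy h.le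
    have hu : ∃ u, d u x ≤ d x y ∧ ¬ d u z ≤ d z w := by
      by_contra! hh
      have a := hh x (self_mem x y)
      have b := hh y (by rw [hd.1.2.1 y x])
      exact absurd (diam_P hd a b) (not_le.2 h)
    obtain ⟨u, hu1, hu2⟩ := hu
    rw [K, not_le] at hu2
    exact hu2.trans_le (diam_P hρ ((K _ _ _).1 hu1) ((K _ _ _).1 h1))
  classical
  choose p q hpq using fun r : spec d => r.2
  let f : ℝ → ℝ := fun r => if h : r ∈ spec d then ρ (F (p ⟨r, h⟩)) (F (q ⟨r, h⟩)) else 0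
  have hf : ∀ a b, f (d a b) = ρ (F a) (F b) := by
    intro a b
    have hm : d a b ∈ spec d := ⟨a, b, rfl⟩
    simp only [f, dif_pos hm]
    have := hpq ⟨_, hm⟩
    exact le_antisymm (M _ _ _ _ this.le) (M _ _ _ _ this.ge)
  have hmono : StrictMonoOn f (spec d) := by
    rintro _ ⟨a, b, rfl⟩ _ ⟨a', b', rfl⟩ h
    rw [hf, hf]; exact S _ _ _ _ h
  refine ⟨F, f, hF, ⟨?_, hmono.injOn, ?_⟩, hmono, hf⟩
  · rintro _ ⟨a, b, rfl⟩
    exact ⟨F a, F b, (hf a b).symm⟩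
  · rintro _ ⟨a, b, rfl⟩
    obtain ⟨a, rfl⟩ := hF.2 a
    obtain ⟨b, rfl⟩ := hF.2 b
    exact ⟨_, ⟨a, b, rfl⟩, hf a b⟩

/-- For a finite nonempty ultrametric space `X`: (every finite nonempty
ultrametric space `Y` admitting a bijective ball-preserving map from `X` is weakly similar
to `X`) iff (the balls of `X` with more than one point are linearly ordered by inclusion,
i.e. `X ∈ ℛ̃`). -/
theorem stmt3 {X : Type} [Finite X] [Nonempty X] (d : X → X → ℝ)
    (hd : IsUltrametric d) :
    (∀ (Y : Type) (_ : Finite Y) (_ : Nonempty Y) (ρ : Y → Y → ℝ),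
        IsUltrametric ρ →
        (∃ F : X → Y, Function.Bijective F ∧ IsBallPreserving d ρ F) →
        WeaklySimilar d ρ) ↔
      (∀ B₁ B₂ : Set X, IsBall d B₁ → IsBall d B₂ →
        B₁.Nontrivial → B₂.Nontrivial → B₁ ⊆ B₂ ∨ B₂ ⊆ B₁) := by
  constructor
  · exact fwd d hd
  · rintro H Y _ _ ρ hρ ⟨F, hF, hb⟩
    exact bwd d hd H ρ hρ F hF hb
end

section
/- Let X be a finite nonempty ultrametric space in which any two distinct balls containing more than one point have distinct diameters. Then the following two statements are equivalent: (i) for every finite nonempty ultrametric space Y in which any two distinct balls containing more than one point have distinct diameters, the existence of a bijective ball-preserving mapping from X to Y implies that X and Y are weakly similar; (ii) letting N denote the set of balls of X with more than one point that strictly contain some other ball with more than one point, and M denote the set of inclusion-minimal balls of X with more than one point: N is linearly ordered by inclusion, every ball in M is contained in the smallest element of N whenever N is nonempty, and all balls in M have the same cardinality. -/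
/-- Balls with more than one point that strictly contain another ball with more than one
point (the non-terminal inner nodes of the representing tree). -/
def strictlyContainingBalls {X : Type*} (d : X → X → ℝ) : Set (Set X) :=
  {B | IsBall d B ∧ B.Nontrivial ∧ ∃ B' : Set X, IsBall d B' ∧ B'.Nontrivial ∧ B' ⊂ B}

/-- Inclusion-minimal balls with more than one point. -/
def minimalNontrivialBalls {X : Type*} (d : X → X → ℝ) : Set (Set X) :=
  {B | IsBall d B ∧ B.Nontrivial ∧
    ∀ B' : Set X, IsBall d B' → B'.Nontrivial → B' ⊆ B → B' = B}

namespace UM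

variable {X : Type} {d ρ : X → X → ℝ}

/-- Points realising the distance `c`. -/
def W (d : X → X → ℝ) (c : ℝ) : Set X := {x | ∃ y, d x y = c}

/-- Equal nonzero distances are realised in the same ball. -/
def U (d : X → X → ℝ) : Prop := ∀ x y u v, d x y = d u v → d x y ≠ 0 → d u x ≤ d x y

/-- Value of a minimal nontrivial ball. -/
def Mv (d : X → X → ℝ) (m : ℝ) : Prop :=
  m ∈ spec d ∧ m ≠ 0 ∧ ∀ x y z, d x y = m → d x z < m → x = z

/-- Value of a nonminimal nontrivial ball. -/
def Nv (d : X → X → ℝ) (n : ℝ) : Prop :=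
  ∃ x y z, d x y = n ∧ x ≠ z ∧ d x z < n

/-- The label order version of the condition. -/
def H (d : X → X → ℝ) : Prop :=
  (∀ n, Nv d n → ∀ c ∈ spec d, c ≠ 0 → c < n → W d c ⊆ W d n) ∧
  (∀ m n, Mv d m → Nv d n → m < n) ∧
  (∀ m m', Mv d m → Mv d m' → (W d m).ncard = (W d m').ncard)

lemma nonneg (hd : IsUltrametric d) (x y : X) : 0 ≤ d x y := hd.1.1 x y
lemma symm (hd : IsUltrametric d) (x y : X) : d x y = d y x := hd.1.2.1 x y
lemma zero_iff (hd : IsUltrametric d) (x y : X) : d x y = 0 ↔ x = y := hd.1.2.2 x y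
lemma self (hd : IsUltrametric d) (x : X) : d x x = 0 := (hd.1.2.2 x x).2 rfl
lemma tri (hd : IsUltrametric d) {x y c} (z : X) (h1 : d x z ≤ c) (h2 : d z y ≤ c) :
    d x y ≤ c := (hd.2 x y z).trans (max_le h1 h2)

lemma ball_form [Finite X] (hd : IsUltrametric d) {B : Set X} (hB : IsBall d B) :
    ∃ t y, B = {z | d z t ≤ d t y} := by
  obtain ⟨t, r, hr, rfl⟩ := hB
  obtain ⟨y, hy, hmax⟩ := Set.exists_max_image {x | d x t ≤ r} (fun y => d t y)
    (Set.toFinite _) ⟨t, by simpa [self hd] using hr⟩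
  refine ⟨t, y, ?_⟩
  ext z
  constructor
  · intro hz
    have := hmax z hz
    simpa [symm hd z t] using this
  · intro hz
    have h1 : d t y ≤ r := by rw [symm hd]; exact hy
    exact le_trans hz h1

lemma ball_mem (hd : IsUltrametric d) {B : Set X} (hB : IsBall d B) {x y z : X}
    (hx : x ∈ B) (hy : y ∈ B) (hz : d z x ≤ d x y) : z ∈ B := by
  obtain ⟨t, r, hr, rfl⟩ := hB
  have hx' : d x t ≤ r := hx
  have hy' : d y t ≤ r := hy
  have : d x y ≤ r := tri hd t hx' (by rw [symm hd]; exact hy')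
  exact tri hd x (hz.trans this) hx'

lemma ball_of (hd : IsUltrametric d) (t y : X) : IsBall d {z | d z t ≤ d t y} :=
  ⟨t, _, nonneg hd _ _, rfl⟩

lemma diam_ball (hd : IsUltrametric d) (t y : X) :
    setDiam d {z | d z t ≤ d t y} = d t y := by
  apply IsGreatest.csSup_eq
  refine ⟨⟨t, ?_, y, ?_, rfl⟩, ?_⟩
  · simpa [self hd] using nonneg hd t y
  · simp [symm hd y t]
  · rintro r ⟨u, hu, v, hv, rfl⟩
    exact tri hd t hu (by rw [symm hd]; exact hv)

lemma U_of (hd : IsUltrametric d)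
    (hinj : ∀ B₁ B₂ : Set X, IsBall d B₁ → IsBall d B₂ → B₁.Nontrivial →
      B₂.Nontrivial → setDiam d B₁ = setDiam d B₂ → B₁ = B₂) : U d := by
  intro x y u v h h0
  have nt : ∀ x y, d x y ≠ 0 → ({z | d z x ≤ d x y} : Set X).Nontrivial := by
    intro x y h
    refine ⟨x, ?_, y, ?_, fun e => h ((zero_iff hd _ _).2 e)⟩
    · simpa [self hd] using nonneg hd x y
    · simp [symm hd y x]
  have := hinj _ _ (ball_of hd x y) (ball_of hd u v) (nt _ _ h0) (nt _ _ (h ▸ h0))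
    (by rw [diam_ball hd, diam_ball hd, h])
  have hu : u ∈ {z | d z u ≤ d u v} := by simpa [self hd] using nonneg hd u v
  rw [← this] at hu
  exact hu

lemma mem_W (hd : IsUltrametric d) (hU : U d) {x y : X} (h0 : d x y ≠ 0) (z : X) :
    z ∈ W d (d x y) ↔ d z x ≤ d x y := by
  constructor
  · rintro ⟨w, hw⟩
    exact hU x y z w hw.symm h0
  · intro hz
    by_cases h : d z x = d x y
    · exact ⟨x, h⟩
    · refine ⟨y, le_antisymm (tri hd x hz le_rfl) ?_⟩
      by_contra hlt
      push Not at hlt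
      have h1 : d z x < d x y := lt_of_le_of_ne hz h
      have := hd.2 x y z
      rw [symm hd x z] at this
      exact absurd this (not_le.2 (max_lt h1 hlt))

lemma W_eq (hd : IsUltrametric d) (hU : U d) {x y : X} (h0 : d x y ≠ 0) :
    W d (d x y) = {z | d z x ≤ d x y} := by
  ext z; exact mem_W hd hU h0 z

lemma W_dist (hd : IsUltrametric d) (hU : U d) {c : ℝ} (h0 : c ≠ 0) {u v : X}
    (hu : u ∈ W d c) (hv : v ∈ W d c) : d u v ≤ c := by
  obtain ⟨y, rfl⟩ := hu
  rw [mem_W hd hU h0] at hv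
  rw [symm hd]; exact hv

lemma W_mem_of (hd : IsUltrametric d) (hU : U d) {c : ℝ} (h0 : c ≠ 0) {u v : X}
    (hu : u ∈ W d c) (hv : d u v ≤ c) : v ∈ W d c := by
  obtain ⟨y, rfl⟩ := hu
  rw [mem_W hd hU h0, symm hd]; exact hv

lemma mem_left (x y : X) : x ∈ W d (d x y) := ⟨y, rfl⟩
lemma mem_right (hd : IsUltrametric d) (x y : X) : y ∈ W d (d x y) := ⟨x, symm hd _ _⟩

lemma W_le (hd : IsUltrametric d) (hU : U d) {c c' : ℝ} (hc : c ∈ spec d) (h0' : c' ≠ 0)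
    (h : W d c ⊆ W d c') : c ≤ c' := by
  obtain ⟨x, y, rfl⟩ := hc
  exact W_dist hd hU h0' (h (mem_left x y)) (h (mem_right hd x y))

lemma W_sub (hd : IsUltrametric d) (hU : U d) {c c' : ℝ} (h0 : c ≠ 0) (h0' : c' ≠ 0)
    (hle : c ≤ c') {x : X} (hx : x ∈ W d c) (hx' : x ∈ W d c') : W d c ⊆ W d c' := by
  intro z hz
  exact W_mem_of hd hU h0' hx' ((W_dist hd hU h0 hx hz).trans hle)

lemma W_ball (hd : IsUltrametric d) (hU : U d) {c : ℝ} (hc : c ∈ spec d) (h0 : c ≠ 0) :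
    IsBall d (W d c) ∧ (W d c).Nontrivial := by
  obtain ⟨x, y, rfl⟩ := hc
  refine ⟨?_, x, mem_left x y, y, mem_right hd x y, fun e => h0 ((zero_iff hd _ _).2 e)⟩
  rw [W_eq hd hU h0]; exact ball_of hd x y

lemma ball_W [Finite X] (hd : IsUltrametric d) (hU : U d) {B : Set X} (hB : IsBall d B)
    (hn : B.Nontrivial) : ∃ c ∈ spec d, c ≠ 0 ∧ B = W d c := by
  obtain ⟨t, y, rfl⟩ := ball_form hd hB
  have h0 : d t y ≠ 0 := by
    intro h
    obtain ⟨u, hu, v, hv, huv⟩ := hn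
    simp only [Set.mem_ofPred_eq, h] at hu hv
    apply huv
    rw [(zero_iff hd _ _).1 (le_antisymm hu (nonneg hd _ _)),
      (zero_iff hd _ _).1 (le_antisymm hv (nonneg hd _ _))]
  exact ⟨d t y, ⟨t, y, rfl⟩, h0, (W_eq hd hU h0).symm⟩

lemma inj_of_U [Finite X] (hd : IsUltrametric d) (hU : U d) :
    ∀ B₁ B₂ : Set X, IsBall d B₁ → IsBall d B₂ → B₁.Nontrivial →
      B₂.Nontrivial → setDiam d B₁ = setDiam d B₂ → B₁ = B₂ := by
  intro B₁ B₂ h1 h2 n1 n2 h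
  obtain ⟨c, ⟨x, y, rfl⟩, h0, rfl⟩ := ball_W hd hU h1 n1
  obtain ⟨c', ⟨x', y', rfl⟩, h0', rfl⟩ := ball_W hd hU h2 n2
  have e1 := W_eq hd hU h0
  have e2 := W_eq hd hU h0'
  rw [e1, e2, diam_ball hd, diam_ball hd] at h
  rw [h]

lemma Nv_pos (hd : IsUltrametric d) {n : ℝ} (h : Nv d n) : n ∈ spec d ∧ n ≠ 0 := by
  obtain ⟨x, y, z, rfl, hz, hlt⟩ := h
  exact ⟨⟨x, y, rfl⟩, (lt_of_le_of_lt (nonneg hd _ _) hlt).ne'⟩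

lemma Mv_or_Nv {c : ℝ} (hc : c ∈ spec d) (h0 : c ≠ 0) : Mv d c ∨ Nv d c := by
  by_cases h : Nv d c
  · exact Or.inr h
  · left
    refine ⟨hc, h0, fun x y z hxy hlt => ?_⟩
    by_contra hne
    exact h ⟨x, y, z, hxy, hne, hlt⟩

lemma not_both {c : ℝ} (h : Mv d c) (h' : Nv d c) : False := by
  obtain ⟨x, y, z, hxy, hne, hlt⟩ := h'
  exact hne (h.2.2 x y z hxy hlt)

/-- A value strictly below a minimal one does not occur at a point of its ball. -/
lemma Mv_disj (hd : IsUltrametric d) {m c : ℝ} (h : Mv d m) (h0 : c ≠ 0) (hlt : c < m) {x : X}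
    (hx : x ∈ W d m) (hx' : x ∈ W d c) : False := by
  obtain ⟨y, hy⟩ := hx
  obtain ⟨z, rfl⟩ := hx'
  have := h.2.2 x y z hy hlt
  exact h0 ((zero_iff hd _ _).2 this)

lemma mem_strict [Finite X] (hd : IsUltrametric d) (hU : U d) {B : Set X} :
    B ∈ strictlyContainingBalls d ↔ ∃ n, Nv d n ∧ B = W d n := by
  constructor
  · rintro ⟨hB, hn, B', hB', hn', hss⟩
    obtain ⟨c, hc, h0, rfl⟩ := ball_W hd hU hB hn
    obtain ⟨c', hc', h0', rfl⟩ := ball_W hd hU hB' hn'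
    refine ⟨c, ?_, rfl⟩
    obtain ⟨x, z, rfl⟩ := hc'
    obtain ⟨y, hy⟩ := hss.1 (mem_left x z)
    refine ⟨x, y, z, hy, fun e => h0' ((zero_iff hd _ _).2 e), ?_⟩
    refine lt_of_le_of_ne (W_le hd hU ⟨x, z, rfl⟩ h0 hss.1) ?_
    intro e
    rw [e] at hss
    exact hss.2 subset_rfl
  · rintro ⟨n, hn, rfl⟩
    have hp := Nv_pos hd hn
    obtain ⟨x, y, z, hxy, hxz, hlt⟩ := hn
    have h0 : d x z ≠ 0 := fun e => hxz ((zero_iff hd _ _).1 e)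
    have hb := W_ball hd hU hp.1 hp.2
    have hb' := W_ball hd hU ⟨x, z, rfl⟩ h0
    refine ⟨hb.1, hb.2, _, hb'.1, hb'.2,
      W_sub hd hU h0 hp.2 hlt.le (mem_left x z) ⟨y, hxy⟩, fun h => ?_⟩
    exact absurd (W_le hd hU hp.1 h0 h) (not_le.2 hlt)

lemma mem_min [Finite X] (hd : IsUltrametric d) (hU : U d) {B : Set X} :
    B ∈ minimalNontrivialBalls d ↔ ∃ m, Mv d m ∧ B = W d m := by
  constructor
  · rintro ⟨hB, hn, hmin⟩
    obtain ⟨c, hc, h0, rfl⟩ := ball_W hd hU hB hn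
    refine ⟨c, ⟨hc, h0, fun x y z hxy hlt => ?_⟩, rfl⟩
    by_contra hne
    have h1 : d x z ≠ 0 := fun e => hne ((zero_iff hd _ _).1 e)
    have hb' := W_ball hd hU ⟨x, z, rfl⟩ h1
    have := hmin _ hb'.1 hb'.2 (W_sub hd hU h1 h0 hlt.le (mem_left x z) ⟨y, hxy⟩)
    exact absurd (W_le hd hU hc h1 this.symm.subset) (not_le.2 hlt)
  · rintro ⟨m, hm, rfl⟩
    have hb := W_ball hd hU hm.1 hm.2.1
    refine ⟨hb.1, hb.2, fun B' hB' hn' hsub => ?_⟩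
    obtain ⟨c', hc', h0', rfl⟩ := ball_W hd hU hB' hn'
    have hle := W_le hd hU hc' hm.2.1 hsub
    rcases hle.lt_or_eq with hlt | rfl
    · exfalso
      obtain ⟨x, z, rfl⟩ := hc'
      exact Mv_disj hd hm h0' hlt (hsub (mem_left x z)) (mem_left x z)
    · rfl

lemma spec_finite [Finite X] : (spec d).Finite := by
  have : spec d = Set.range (fun p : X × X => d p.1 p.2) := by
    ext r; simp [spec]
  rw [this]; exact Set.finite_range _

lemma cond_iff_H [Finite X] (hd : IsUltrametric d) (hU : U d) :
    ((∀ B₁ ∈ strictlyContainingBalls d, ∀ B₂ ∈ strictlyContainingBalls d,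
          B₁ ⊆ B₂ ∨ B₂ ⊆ B₁) ∧
        (∀ B₀ ∈ strictlyContainingBalls d,
          (∀ B ∈ strictlyContainingBalls d, B₀ ⊆ B) →
          ∀ B ∈ minimalNontrivialBalls d, B ⊆ B₀) ∧
        (∀ B₁ ∈ minimalNontrivialBalls d, ∀ B₂ ∈ minimalNontrivialBalls d,
          B₁.ncard = B₂.ncard)) ↔ H d := by
  constructor
  · rintro ⟨h1, h2, h3⟩
    have chain : ∀ n n', Nv d n → Nv d n' → n ≤ n' → W d n ⊆ W d n' := by
      intro n n' hn hn' hle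
      rcases h1 _ ((mem_strict hd hU).2 ⟨n, hn, rfl⟩) _ ((mem_strict hd hU).2 ⟨n', hn', rfl⟩)
        with h | h
      · exact h
      · have := W_le hd hU (Nv_pos hd hn').1 (Nv_pos hd hn).2 h
        rw [le_antisymm hle this]
    have sub : ∀ m n, Mv d m → Nv d n → W d m ⊆ W d n := by
      intro m n hm hn
      obtain ⟨n0, hn0, hmin⟩ := Set.exists_min_image {n | Nv d n} id
        (spec_finite.subset fun n hn => (Nv_pos hd hn).1) ⟨n, hn⟩
      have hsub := h2 _ ((mem_strict hd hU).2 ⟨n0, hn0, rfl⟩) (by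
        intro B hB
        obtain ⟨k, hk, rfl⟩ := (mem_strict hd hU).1 hB
        exact chain _ _ hn0 hk (hmin k hk)) _ ((mem_min hd hU).2 ⟨m, hm, rfl⟩)
      exact hsub.trans (chain _ _ hn0 hn (hmin n hn))
    refine ⟨?_, ?_, ?_⟩
    · intro n hn c hc h0 hlt
      rcases Mv_or_Nv hc h0 with h | h
      · exact sub _ _ h hn
      · exact chain _ _ h hn hlt.le
    · intro m n hm hn
      refine lt_of_le_of_ne (W_le hd hU hm.1 (Nv_pos hd hn).2 (sub _ _ hm hn)) ?_
      rintro rfl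
      exact not_both hm hn
    · intro m m' hm hm'
      exact h3 _ ((mem_min hd hU).2 ⟨m, hm, rfl⟩) _ ((mem_min hd hU).2 ⟨m', hm', rfl⟩)
  · rintro ⟨h1, h2, h3⟩
    refine ⟨?_, ?_, ?_⟩
    · intro B₁ hB₁ B₂ hB₂
      obtain ⟨n, hn, rfl⟩ := (mem_strict hd hU).1 hB₁
      obtain ⟨n', hn', rfl⟩ := (mem_strict hd hU).1 hB₂
      rcases lt_trichotomy n n' with h | h | h
      · exact Or.inl (h1 _ hn' _ (Nv_pos hd hn).1 (Nv_pos hd hn).2 h)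
      · subst h; exact Or.inl subset_rfl
      · exact Or.inr (h1 _ hn _ (Nv_pos hd hn').1 (Nv_pos hd hn').2 h)
    · intro B₀ hB₀ _ B hB
      obtain ⟨n, hn, rfl⟩ := (mem_strict hd hU).1 hB₀
      obtain ⟨m, hm, rfl⟩ := (mem_min hd hU).1 hB
      exact h1 _ hn _ hm.1 hm.2.1 (h2 _ _ hm hn)
    · intro B₁ hB₁ B₂ hB₂
      obtain ⟨m, hm, rfl⟩ := (mem_min hd hU).1 hB₁
      obtain ⟨m', hm', rfl⟩ := (mem_min hd hU).1 hB₂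
      exact h3 _ _ hm hm'


lemma ball_transfer [Finite X] (hd : IsUltrametric d) (hρ : IsUltrametric ρ)
    (hE : ∀ x y z, d z x ≤ d x y ↔ ρ z x ≤ ρ x y) {B : Set X} (hB : IsBall d B) :
    IsBall ρ B := by
  obtain ⟨t, y, rfl⟩ := ball_form hd hB
  simp only [hE]
  exact ball_of hρ t y

lemma transfer_le (hd : IsUltrametric d) (hρ : IsUltrametric ρ)
    (hB : ∀ B, IsBall ρ B → IsBall d B) {x y z : X} (h : d z x ≤ d x y) : ρ z x ≤ ρ x y := by
  have hb := hB _ (ball_of hρ x y)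
  have hx : x ∈ {z | ρ z x ≤ ρ x y} := by simpa [self hρ] using nonneg hρ x y
  have hy : y ∈ {z | ρ z x ≤ ρ x y} := by simp [symm hρ y x]
  exact ball_mem hd hb hx hy h

/-- If `u`, `v` lie in the ball generated by `x`, `y` for `d`, distances compare for `ρ`. -/
lemma transfer_W (hd : IsUltrametric d) (hU : U d) (hρ : IsUltrametric ρ)
    (hB : ∀ B, IsBall ρ B → IsBall d B) {x y u v : X} (h0 : d x y ≠ 0)
    (hu : u ∈ W d (d x y)) (hv : v ∈ W d (d x y)) : ρ u v ≤ ρ x y := by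
  rw [mem_W hd hU h0] at hu hv
  have h1 := transfer_le hd hρ hB hu
  have h2 := transfer_le hd hρ hB hv
  rw [symm hρ v x] at h2
  exact tri hρ x h1 h2

lemma transfer_eq (hd : IsUltrametric d) (hU : U d) (hρ : IsUltrametric ρ)
    (hB : ∀ B, IsBall ρ B → IsBall d B) {x y u v : X} (h : d x y = d u v) : ρ x y = ρ u v := by
  by_cases h0 : d x y = 0
  · have h1 := (zero_iff hd _ _).1 h0
    have h2 := (zero_iff hd _ _).1 (h ▸ h0)
    rw [h1, h2, self hρ, self hρ]
  · have h0' : d u v ≠ 0 := h ▸ h0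
    apply le_antisymm
    · exact transfer_W hd hU hρ hB h0' (h ▸ mem_left x y) (h ▸ mem_right hd x y)
    · exact transfer_W hd hU hρ hB h0 (h ▸ mem_left u v) (h ▸ mem_right hd u v)

lemma order_lemma {α β : Type} [LinearOrder α] [LinearOrder β] [Finite α] (g : α ≃ β) :
    ∃ f : α ≃o β, ∀ n, (∀ c, c < n ↔ g c < g n) → f n = g n := by
  classical
  have := Fintype.ofFinite α
  have := Fintype.ofEquiv α g
  have hc : Fintype.card β = Fintype.card α := (Fintype.card_congr g).symm
  let f : α ≃o β := (Fintype.orderIsoFinOfCardEq α rfl).symm.trans (Fintype.orderIsoFinOfCardEq β hc)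
  refine ⟨f, fun n hn => ?_⟩
  have key : (Finset.univ.filter (· < f n)).card = (Finset.univ.filter (· < g n)).card := by
    have e1 : (Finset.univ.filter (· < f n)) = (Finset.univ.filter (· < n)).map f.toEquiv.toEmbedding := by
      ext b
      obtain ⟨a, rfl⟩ := f.surjective b
      simp
    have e2 : (Finset.univ.filter (· < g n)) = (Finset.univ.filter (· < n)).map g.toEmbedding := by
      ext b
      obtain ⟨a, rfl⟩ := g.surjective b
      simp [hn]
    rw [e1, e2, Finset.card_map, Finset.card_map]
  have mono : ∀ a b : β, a < b →
      (Finset.univ.filter (· < a)).card < (Finset.univ.filter (· < b)).card := by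
    intro a b hab
    apply Finset.card_lt_card
    refine ⟨fun x hx => ?_, fun h => ?_⟩
    · simp at hx ⊢; exact hx.trans hab
    · have : a ∈ Finset.univ.filter (· < a) := h (by simp [hab])
      simp at this
  rcases lt_trichotomy (f n) (g n) with h | h | h
  · exact absurd key (mono _ _ h).ne
  · exact h
  · exact absurd key (mono _ _ h).ne'



lemma strictMonoOn_id {A : Set ℝ} (hA : A.Finite) {f : ℝ → ℝ} (hm : Set.MapsTo f A A)
    (hf : StrictMonoOn f A) {a : ℝ} (ha : a ∈ A) : f a = a := by
  have : Finite A := hA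
  let g : A → A := fun x => ⟨f x, hm x.2⟩
  have hg : StrictMono g := fun x y h => hf x.2 y.2 h
  have h1 : (⟨a, ha⟩ : A) ≤ g ⟨a, ha⟩ := hg.le_apply
  have h2 : g ⟨a, ha⟩ ≤ (⟨a, ha⟩ : A) := hg.apply_le
  exact le_antisymm h2 h1

lemma swap_le {A : Set ℝ} {a b : ℝ} (hab : a < b) (hadj : ∀ v ∈ A, a < v → v < b → False)
    {v w : ℝ} (hv : v ∈ A) (hw : w ∈ A) (h1 : ¬ (v = a ∧ w = b)) (h2 : ¬ (v = b ∧ w = a)) :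
    v ≤ w ↔ Equiv.swap a b v ≤ Equiv.swap a b w := by
  have hv' := hadj v hv
  have hw' := hadj w hw
  rw [Equiv.swap_apply_def, Equiv.swap_apply_def]
  split_ifs <;> grind

lemma exists_swap [Finite X] (hd : IsUltrametric d) (hU : U d)
    (hi : ∀ ρ : X → X → ℝ, IsUltrametric ρ → U ρ → (∀ B, IsBall d B ↔ IsBall ρ B) →
      WeaklySimilar d ρ)
    {a b : ℝ} (ha : a ∈ spec d) (hb : b ∈ spec d) (ha0 : a ≠ 0) (hb0 : b ≠ 0) (hab : a < b)
    (hadj : ∀ v ∈ spec d, a < v → v < b → False)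
    (hdisj : ∀ x, x ∈ W d a → x ∈ W d b → False) :
    ∃ Φ : X → X, Function.Injective Φ ∧ ∀ x y, d (Φ x) (Φ y) = Equiv.swap a b (d x y) := by
  set s := Equiv.swap a b with hs
  let ρ : X → X → ℝ := fun x y => s (d x y)
  have hs0 : s 0 = 0 := Equiv.swap_apply_of_ne_of_ne ha0.symm hb0.symm
  have hss : ∀ v, s (s v) = v := fun v => Equiv.swap_apply_self a b v
  have hmaps : ∀ v ∈ spec d, s v ∈ spec d := by
    intro v hv
    rw [hs, Equiv.swap_apply_def]
    split_ifs
    · exact hb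
    · exact ha
    · exact hv
  -- values at a common point are compared correctly
  have hcmp : ∀ x y z, d x z ≤ d x y ↔ ρ x z ≤ ρ x y := by
    intro x y z
    apply swap_le hab hadj ⟨x, z, rfl⟩ ⟨x, y, rfl⟩
    · rintro ⟨h1, h2⟩; exact hdisj x ⟨z, h1⟩ ⟨y, h2⟩
    · rintro ⟨h1, h2⟩; exact hdisj x ⟨y, h2⟩ ⟨z, h1⟩
  have hsymm : ∀ x y, ρ x y = ρ y x := fun x y => by simp only [ρ, symm hd x y]
  have hρ : IsUltrametric ρ := by
    refine ⟨⟨?_, hsymm, ?_⟩, ?_⟩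
    · intro x y
      obtain ⟨u, v, huv⟩ := hmaps _ ⟨x, y, rfl⟩
      show 0 ≤ s (d x y)
      rw [← huv]; exact nonneg hd u v
    · intro x y
      show s (d x y) = 0 ↔ _
      rw [← zero_iff hd x y, ← hs0, s.injective.eq_iff, hs0]
    · intro x y z
      rcases le_max_iff.1 (hd.2 x y z) with h | h
      · exact le_max_of_le_left ((hcmp _ _ _).1 h)
      · apply le_max_of_le_right
        rw [hsymm x y, hsymm z y]
        rw [symm hd x y, symm hd z y] at h
        exact (hcmp _ _ _).1 h
  have hE : ∀ x y z, d z x ≤ d x y ↔ ρ z x ≤ ρ x y := by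
    intro x y z
    rw [symm hd z x, hsymm z x]; exact hcmp x y z
  have hUρ : U ρ := by
    intro x y u v h h0
    have h' : d x y = d u v := s.injective h
    have h0' : d x y ≠ 0 := by
      intro e; apply h0; show s (d x y) = 0; rw [e, hs0]
    exact (hE x y u).1 (hU x y u v h' h0')
  obtain ⟨Φ, f, hbij, hf, hmono, heq⟩ := hi ρ hρ hUρ
    (fun B => ⟨ball_transfer hd hρ hE, ball_transfer hρ hd (fun x y z => (hE x y z).symm)⟩)
  refine ⟨Φ, hbij.1, fun x y => ?_⟩
  have hm : Set.MapsTo f (spec d) (spec d) := by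
    intro v hv
    obtain ⟨u, w, huw⟩ := hf.mapsTo hv
    rw [← huw]
    exact hmaps _ ⟨u, w, rfl⟩
  have := strictMonoOn_id spec_finite hm hmono ⟨x, y, rfl⟩
  rw [heq] at this
  rw [← this]
  exact (hss _).symm

lemma swap_conseq [Finite X] (hd : IsUltrametric d) (hU : U d)
    (hi : ∀ ρ : X → X → ℝ, IsUltrametric ρ → U ρ → (∀ B, IsBall d B ↔ IsBall ρ B) →
      WeaklySimilar d ρ)
    {a b : ℝ} (ha : a ∈ spec d) (hb : b ∈ spec d) (ha0 : a ≠ 0) (hb0 : b ≠ 0) (hab : a < b)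
    (hadj : ∀ v ∈ spec d, a < v → v < b → False)
    (hns : ¬ W d a ⊆ W d b) :
    Mv d a ∧ Mv d b ∧ (∀ c, b < c → c ≠ 0 → W d b ⊆ W d c → W d a ⊆ W d c) ∧
      (W d a).ncard = (W d b).ncard := by
  have hdisj : ∀ x, x ∈ W d a → x ∈ W d b → False := fun x h1 h2 =>
    hns (W_sub hd hU ha0 hb0 hab.le h1 h2)
  obtain ⟨Φ, hΦ, hs⟩ := exists_swap hd hU hi ha hb ha0 hb0 hab hadj hdisj
  have hWab : ∀ x ∈ W d a, Φ x ∈ W d b := by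
    rintro x ⟨y, hy⟩
    exact ⟨Φ y, by rw [hs, hy, Equiv.swap_apply_left]⟩
  have hWba : ∀ x ∈ W d b, Φ x ∈ W d a := by
    rintro x ⟨y, hy⟩
    exact ⟨Φ y, by rw [hs, hy, Equiv.swap_apply_right]⟩
  have hWc : ∀ c, c ≠ a → c ≠ b → ∀ x ∈ W d c, Φ x ∈ W d c := by
    rintro c h1 h2 x ⟨y, hy⟩
    exact ⟨Φ y, by rw [hs, hy, Equiv.swap_apply_of_ne_of_ne h1 h2]⟩
  refine ⟨⟨ha, ha0, ?_⟩, ⟨hb, hb0, ?_⟩, ?_, ?_⟩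
  · intro x y z hxy hlt
    by_contra hne
    have h0 : d x z ≠ 0 := fun e => hne ((zero_iff hd _ _).1 e)
    have hx : x ∈ W d a := ⟨y, hxy⟩
    have h1 := hWab x hx
    have h2 := hWc _ hlt.ne (hlt.trans hab).ne x (mem_left x z)
    exact hdisj _ (W_sub hd hU h0 ha0 hlt.le (mem_left x z) hx h2) h1
  · intro x y z hxy hlt
    by_contra hne
    have h0 : d x z ≠ 0 := fun e => hne ((zero_iff hd _ _).1 e)
    have hx : x ∈ W d b := ⟨y, hxy⟩
    have h1 := hWba x hx
    have h2 := hWc _ (fun e => hdisj x ⟨z, e⟩ hx) hlt.ne x (mem_left x z)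
    exact hdisj _ h1 (W_sub hd hU h0 hb0 hlt.le (mem_left x z) hx h2)
  · intro c hc hc0 hsub
    obtain ⟨x, y, hxy⟩ := hb
    have hx : x ∈ W d b := ⟨y, hxy⟩
    exact W_sub hd hU ha0 hc0 (hab.trans hc).le (hWba x hx)
      (hWc c (hab.trans hc).ne' hc.ne' x (hsub hx))
  · apply le_antisymm
    · exact Set.ncard_le_ncard_of_injOn Φ hWab hΦ.injOn (Set.toFinite _)
    · exact Set.ncard_le_ncard_of_injOn Φ hWba hΦ.injOn (Set.toFinite _)

lemma necessity [Finite X] (hd : IsUltrametric d) (hU : U d)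
    (hi : ∀ ρ : X → X → ℝ, IsUltrametric ρ → U ρ → (∀ B, IsBall d B ↔ IsBall ρ B) →
      WeaklySimilar d ρ) : H d := by
  let S := {c : ℝ // c ∈ spec d ∧ c ≠ 0}
  have hfin : Finite S := (spec_finite.subset (fun c hc => hc.1) : {c | c ∈ spec d ∧ c ≠ 0}.Finite)
  have hpos : ∀ c : S, 0 < c.1 := by
    rintro ⟨c, ⟨x, y, rfl⟩, h0⟩
    exact lt_of_le_of_ne (nonneg hd x y) (Ne.symm h0)
  have key : ∀ a b : S, a ⋖ b → ¬ W d a.1 ⊆ W d b.1 →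
      Mv d a ∧ Mv d b ∧ (∀ c : ℝ, b.1 < c → c ≠ 0 → W d b ⊆ W d c → W d a ⊆ W d c) ∧
      (W d a).ncard = (W d b).ncard := by
    intro a b hab hns
    refine swap_conseq hd hU hi a.2.1 b.2.1 a.2.2 b.2.2 hab.1 ?_ hns
    intro v hv h1 h2
    exact hab.2 (c := ⟨v, hv, ((hpos a).trans h1).ne'⟩) h1 h2
  have c1 : ∀ b : S, Nv d b → ∀ c : S, c < b → W d c.1 ⊆ W d b.1 := by
    intro b hb c
    induction c using WellFoundedGT.induction with
    | ind c ih =>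
      intro hcb
      obtain ⟨e, hce, heb⟩ := exists_covBy_le_of_lt hcb
      by_contra hns
      rcases heb.lt_or_eq with hlt | rfl
      · have hsub := ih e hce.1 hlt
        have hns' : ¬ W d c.1 ⊆ W d e.1 := fun h => hns (h.trans hsub)
        exact hns ((key c e hce hns').2.2.1 b hlt b.2.2 hsub)
      · exact not_both (key c e hce hns).2.1 hb
  have c2 : ∀ m : S, Mv d m → ∀ c : S, c < m → Mv d c ∧ (W d c.1).ncard = (W d m.1).ncard := by
    intro m
    induction m using WellFoundedLT.induction with
    | ind m ih =>
      intro hm c hcm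
      obtain ⟨e, hce, hem⟩ := exists_le_covBy_of_lt hcm
      have hns : ¬ W d e.1 ⊆ W d m.1 := by
        intro h
        obtain ⟨x, y, hxy⟩ := e.2.1
        have hx : x ∈ W d e.1 := ⟨y, hxy⟩
        exact Mv_disj hd hm e.2.2 hem.1 (h hx) hx
      have hk := key e m hem hns
      rcases hce.lt_or_eq with hlt | rfl
      · have := ih e hem.1 hk.1 c hlt
        exact ⟨this.1, this.2.trans hk.2.2.2⟩
      · exact ⟨hk.1, hk.2.2.2⟩
  refine ⟨?_, ?_, ?_⟩
  · intro n hn c hc h0 hlt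
    exact c1 ⟨n, Nv_pos hd hn⟩ hn ⟨c, hc, h0⟩ hlt
  · intro m n hm hn
    rcases lt_trichotomy m n with h | h | h
    · exact h
    · subst h; exact (not_both hm hn).elim
    · exact (not_both (c2 ⟨m, hm.1, hm.2.1⟩ hm ⟨n, Nv_pos hd hn⟩ h).1 hn).elim
  · intro m m' hm hm'
    rcases lt_trichotomy m m' with h | h | h
    · exact (c2 ⟨m', hm'.1, hm'.2.1⟩ hm' ⟨m, hm.1, hm.2.1⟩ h).2
    · rw [h]
    · exact (c2 ⟨m, hm.1, hm.2.1⟩ hm ⟨m', hm'.1, hm'.2.1⟩ h).2.symm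


lemma Mv_unique (hd : IsUltrametric d) {m m' : ℝ} (h : Mv d m) (h' : Mv d m') {x : X}
    (hx : x ∈ W d m) (hx' : x ∈ W d m') : m = m' := by
  rcases lt_trichotomy m m' with hlt | he | hlt
  · exact (Mv_disj hd h' h.2.1 hlt hx' hx).elim
  · exact he
  · exact (Mv_disj hd h h'.2.1 hlt hx hx').elim

lemma realise [Finite X] (hd : IsUltrametric d) (hU : U d) (hH : H d) (p : ℝ → ℝ)
    (hp : ∀ m, Mv d m → Mv d (p m)) (hpinj : ∀ m m', Mv d m → Mv d m' → p m = p m' → m = m')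
    (hp0 : p 0 = 0) (hpN : ∀ n, Nv d n → p n = n) :
    ∃ Φ : X → X, Function.Injective Φ ∧ ∀ x y, d (Φ x) (Φ y) = p (d x y) := by
  classical
  obtain ⟨h1, h2, h3⟩ := hH
  have he : ∀ m, ∃ e : X → X, Mv d m → Set.MapsTo e (W d m) (W d (p m)) ∧ Set.InjOn e (W d m) := by
    intro m
    by_cases hm : Mv d m
    · have hc := h3 _ _ hm (hp m hm)
      have := Fintype.ofFinite (W d m)
      have := Fintype.ofFinite (W d (p m))
      have e : W d m ≃ W d (p m) := by
        apply Fintype.equivOfCardEq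
        rw [← Nat.card_eq_fintype_card, ← Nat.card_eq_fintype_card]
        exact hc
      refine ⟨fun x => if hx : x ∈ W d m then (e ⟨x, hx⟩ : X) else x, fun _ => ⟨?_, ?_⟩⟩
      · intro x hx
        simp only [hx, dite_true]
        exact (e ⟨x, hx⟩).2
      · intro x hx y hy hxy
        simp only [hx, hy, dite_true] at hxy
        have := e.injective (Subtype.ext hxy)
        exact congrArg Subtype.val this
    · exact ⟨id, fun h => (hm h).elim⟩
  choose e he using he
  let Φ : X → X := fun x => if h : ∃ m, Mv d m ∧ x ∈ W d m then e h.choose x else x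
  have Φin : ∀ m x, Mv d m → x ∈ W d m → Φ x = e m x := by
    intro m x hm hx
    have h : ∃ m, Mv d m ∧ x ∈ W d m := ⟨m, hm, hx⟩
    have : h.choose = m := Mv_unique hd h.choose_spec.1 hm h.choose_spec.2 hx
    simp only [Φ, dif_pos h, this]
  have Φmem : ∀ m x, Mv d m → x ∈ W d m → Φ x ∈ W d (p m) := by
    intro m x hm hx
    rw [Φin m x hm hx]; exact (he m hm).1 hx
  have Φout : ∀ x, (¬ ∃ m, Mv d m ∧ x ∈ W d m) → Φ x = x := by
    intro x h; simp only [Φ, dif_neg h]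
  -- images in a minimal ball come from a minimal ball
  have Φback : ∀ k x, Mv d k → Φ x ∈ W d k → ∃ m, Mv d m ∧ x ∈ W d m ∧ p m = k := by
    intro k x hk hx
    by_cases h : ∃ m, Mv d m ∧ x ∈ W d m
    · obtain ⟨m, hm, hxm⟩ := h
      exact ⟨m, hm, hxm, Mv_unique hd (hp m hm) hk (Φmem m x hm hxm) hx⟩
    · rw [Φout x h] at hx
      exact (h ⟨k, hk, hx⟩).elim
  have hMN : ∀ m n, Mv d m → Nv d n → W d m ⊆ W d n := fun m n hm hn =>
    h1 n hn m hm.1 hm.2.1 (h2 m n hm hn)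
  have ΦN : ∀ n x, Nv d n → (Φ x ∈ W d n ↔ x ∈ W d n) := by
    intro n x hn
    by_cases h : ∃ m, Mv d m ∧ x ∈ W d m
    · obtain ⟨m, hm, hxm⟩ := h
      exact ⟨fun _ => hMN m n hm hn hxm, fun _ => hMN _ n (hp m hm) hn (Φmem m x hm hxm)⟩
    · rw [Φout x h]
  have same : ∀ k x y n, Mv d k → Nv d n → Φ x ∈ W d k → Φ y ∈ W d k → d x y = n → False := by
    intro k x y n hk hn hx hy hxy
    obtain ⟨m, hm, hxm, e1⟩ := Φback k x hk hx
    obtain ⟨m', hm', hym, e2⟩ := Φback k y hk hy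
    have : m = m' := hpinj m m' hm hm' (e1.trans e2.symm)
    subst this
    have hle := W_dist hd hU hm.2.1 hxm hym
    rw [hxy] at hle
    exact absurd (h2 m n hm hn) (not_lt.2 hle)
  have hinj : Function.Injective Φ := by
    intro x y hxy
    by_cases h : ∃ m, Mv d m ∧ x ∈ W d m
    · obtain ⟨m, hm, hxm⟩ := h
      have hx' := Φmem m x hm hxm
      have hy' := hx'
      rw [hxy] at hy'
      obtain ⟨m', hm', hym, e2⟩ := Φback _ y (hp m hm) hy'
      have : m' = m := hpinj m' m hm' hm e2
      subst this
      rw [Φin _ x hm hxm, Φin _ y hm hym] at hxy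
      exact (he _ hm).2 hxm hym hxy
    · have ex := Φout x h
      by_cases h' : ∃ m, Mv d m ∧ y ∈ W d m
      · obtain ⟨m, hm, hym⟩ := h'
        have := Φmem m y hm hym
        rw [← hxy, ex] at this
        exact (h ⟨_, hp m hm, this⟩).elim
      · rw [ex, Φout y h'] at hxy
        exact hxy
  refine ⟨Φ, hinj, fun x y => ?_⟩
  by_cases h0 : d x y = 0
  · rw [h0, hp0, (zero_iff hd _ _).1 h0, self hd]
  have hne : Φ x ≠ Φ y := fun e => h0 ((zero_iff hd _ _).2 (hinj e))
  have hc0 : d (Φ x) (Φ y) ≠ 0 := fun e => hne ((zero_iff hd _ _).1 e)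
  rcases Mv_or_Nv ⟨x, y, rfl⟩ h0 with hm | hn
  · have hx := Φmem _ x hm (mem_left x y)
    have hy := Φmem _ y hm (mem_right hd x y)
    have hle := W_dist hd hU (hp _ hm).2.1 hx hy
    refine le_antisymm hle ?_
    by_contra hlt
    push Not at hlt
    obtain ⟨w, hw⟩ := hx
    exact hne ((hp _ hm).2.2 _ w _ hw hlt)
  · rw [hpN _ hn]
    have hx := (ΦN _ x hn).2 (mem_left x y)
    have hy := (ΦN _ y hn).2 (mem_right hd x y)
    have hle := W_dist hd hU h0 hx hy
    refine le_antisymm hle ?_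
    rcases Mv_or_Nv ⟨Φ x, Φ y, rfl⟩ hc0 with hm' | hn'
    · exact (same _ x y _ hm' hn (mem_left _ _) (mem_right hd _ _) rfl).elim
    · exact W_dist hd hU hc0 ((ΦN _ x hn').1 (mem_left _ _)) ((ΦN _ y hn').1 (mem_right hd _ _))

lemma sufficiency [Finite X] [Nonempty X] (hd : IsUltrametric d) (hU : U d) (hH : H d)
    (hρ : IsUltrametric ρ) (hUρ : U ρ) (hB : ∀ B, IsBall d B ↔ IsBall ρ B) :
    WeaklySimilar d ρ := by
  classical
  have hT : ∀ {x y u v : X}, d x y = d u v ↔ ρ x y = ρ u v := fun {x y u v} =>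
    ⟨transfer_eq hd hU hρ (fun B => (hB B).2), transfer_eq hρ hUρ hd (fun B => (hB B).1)⟩
  have hfin : Finite (spec d) := spec_finite
  let g0 : spec d → spec ρ := fun c =>
    ⟨ρ c.2.choose c.2.choose_spec.choose, _, _, rfl⟩
  have hg0 : ∀ x y, (g0 ⟨d x y, x, y, rfl⟩ : ℝ) = ρ x y := by
    intro x y
    have h : d x y ∈ spec d := ⟨x, y, rfl⟩
    exact hT.1 h.choose_spec.choose_spec
  have hg0b : Function.Bijective g0 := by
    constructor
    · rintro ⟨c, x, y, rfl⟩ ⟨c', u, v, rfl⟩ h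
      have h' := congrArg Subtype.val h
      rw [hg0, hg0] at h'
      exact Subtype.ext (hT.2 h')
    · rintro ⟨c, x, y, rfl⟩
      exact ⟨⟨d x y, x, y, rfl⟩, Subtype.ext (hg0 x y)⟩
  let g : spec d ≃ spec ρ := Equiv.ofBijective g0 hg0b
  have hg : ∀ x y, (g ⟨d x y, x, y, rfl⟩ : ℝ) = ρ x y := hg0
  -- g is strictly increasing along inclusion of balls
  have hginc : ∀ c n : spec d, c < n → (c.1 ≠ 0 → W d c.1 ⊆ W d n.1) → g c < g n := by
    rintro ⟨c, u, v, rfl⟩ ⟨n, x, y, rfl⟩ hlt hsub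
    refine lt_of_le_of_ne ?_ (fun e => hlt.ne (g.injective e))
    show (g ⟨d u v, u, v, rfl⟩ : ℝ) ≤ g ⟨d x y, x, y, rfl⟩
    rw [hg, hg]
    by_cases h0 : d u v = 0
    · rw [(zero_iff hd _ _).1 h0, self hρ]; exact nonneg hρ _ _
    · have hlt' : d u v < d x y := hlt
      have := hsub h0
      exact transfer_W hd hU hρ (fun B => (hB B).2)
        ((nonneg hd u v).trans_lt hlt').ne' (this (mem_left u v)) (this (mem_right hd u v))
  obtain ⟨f, hf⟩ := order_lemma g
  have hfN : ∀ n : spec d, Nv d n → f n = g n := by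
    intro n hn
    apply hf
    intro c
    constructor
    · intro hlt
      exact hginc c n hlt (fun h0 => hH.1 n hn c c.2 h0 hlt)
    · intro hlt
      by_contra hcn
      push Not at hcn
      rcases hcn.lt_or_eq with h | h
      · have h' : n.1 < c.1 := h
        obtain ⟨x, y, hxy⟩ := n.2
        have hc0 : c.1 ≠ 0 := ((hxy ▸ nonneg hd x y : (0:ℝ) ≤ n.1).trans_lt h').ne'
        have hcN : Nv d c := by
          rcases Mv_or_Nv c.2 hc0 with hm | hN
          · exact absurd (hH.2.1 _ _ hm hn) (not_lt.2 h'.le)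
          · exact hN
        exact absurd (hginc n c h (fun h0 => hH.1 c hcN n n.2 h0 h')) (not_lt.2 hlt.le)
      · rw [h] at hlt; exact lt_irrefl _ hlt
  obtain ⟨x0⟩ := ‹Nonempty X›
  let z : spec d := ⟨0, x0, x0, self hd x0⟩
  have hz : ∀ c : spec d, z ≤ c := by
    rintro ⟨c, x, y, rfl⟩; exact nonneg hd x y
  have hf0 : f z = g z := by
    apply hf
    intro c
    constructor
    · intro h; exact absurd h (not_lt.2 (hz c))
    · intro h
      exfalso
      rcases (hz c).lt_or_eq with h' | h'
      · exact absurd (hginc z c h' (fun h0 => (h0 rfl).elim)) (not_lt.2 h.le)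
      · rw [h'] at h; exact lt_irrefl _ h
  let q : spec d → spec d := fun c => g.symm (f c)
  have hqinj : Function.Injective q := g.symm.injective.comp f.injective
  have hq0 : q z = z := by simp only [q, hf0, Equiv.symm_apply_apply]
  have hqN : ∀ n : spec d, Nv d n → q n = n := fun n hn => by
    simp only [q, hfN n hn, Equiv.symm_apply_apply]
  let p : ℝ → ℝ := fun c => if h : c ∈ spec d then q ⟨c, h⟩ else c
  have hpq : ∀ c : spec d, p c = q c := fun c => by simp only [p, c.2, dite_true]
  obtain ⟨Φ, hΦ, hΦd⟩ := realise hd hU hH p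
    (by
      intro m hm
      have e := hpq ⟨m, hm.1⟩
      simp only at e
      rw [e]
      have hne : (q ⟨m, hm.1⟩ : ℝ) ≠ 0 := by
        intro h
        have : q ⟨m, hm.1⟩ = q z := by rw [hq0]; exact Subtype.ext h
        exact hm.2.1 (congrArg Subtype.val (hqinj this))
      rcases Mv_or_Nv (q ⟨m, hm.1⟩).2 hne with h | h
      · exact h
      · exfalso
        have h1 := hqN _ h
        have h2 := congrArg Subtype.val (hqinj h1)
        rw [h2] at h
        exact not_both hm h)
    (by
      intro m m' hm hm' h
      have e := hpq ⟨m, hm.1⟩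
      have e' := hpq ⟨m', hm'.1⟩
      simp only at e e'
      rw [e, e'] at h
      exact congrArg Subtype.val (hqinj (Subtype.ext h)))
    (by
      have e := hpq z
      rw [hq0] at e
      exact e)
    (by
      intro n hn
      have e := hpq ⟨n, (Nv_pos hd hn).1⟩
      rw [hqN _ hn] at e
      exact e)
  have hf' : ∀ x y, (f ⟨d x y, x, y, rfl⟩ : ℝ) = ρ (Φ x) (Φ y) := by
    intro x y
    have e1 : q ⟨d x y, x, y, rfl⟩ = ⟨d (Φ x) (Φ y), _, _, rfl⟩ := by
      apply Subtype.ext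
      rw [← hpq]
      exact (hΦd x y).symm
    have e2 := congrArg g e1
    simp only [q, Equiv.apply_symm_apply] at e2
    rw [e2, hg]
  let F : ℝ → ℝ := fun c => if h : c ∈ spec d then f ⟨c, h⟩ else c
  have hF : ∀ c : spec d, F c = f c := fun c => by simp only [F, c.2, dite_true]
  refine ⟨Φ, F, Finite.injective_iff_bijective.1 hΦ, ⟨?_, ?_, ?_⟩, ?_, ?_⟩
  · intro c hc
    rw [hF ⟨c, hc⟩]; exact (f ⟨c, hc⟩).2
  · intro c hc c' hc' h
    rw [hF ⟨c, hc⟩, hF ⟨c', hc'⟩] at h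
    exact congrArg Subtype.val (f.injective (Subtype.ext h))
  · intro c hc
    refine ⟨f.symm ⟨c, hc⟩, (f.symm ⟨c, hc⟩).2, ?_⟩
    rw [hF, OrderIso.apply_symm_apply]
  · intro c hc c' hc' h
    rw [hF ⟨c, hc⟩, hF ⟨c', hc'⟩]
    exact f.strictMono h
  · intro x y
    rw [← hf']
    exact hF ⟨d x y, x, y, rfl⟩

end UM

/-- Let `X` be a finite nonempty ultrametric space in which distinct balls
with more than one point have distinct diameters (`X ∈ 𝔇`). Then: (for every such `Y`,
a bijective ball-preserving map `X → Y` forces `X` and `Y` to be weakly similar) iff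
(the set `N` of balls with more than one point strictly containing another such ball is
linearly ordered by inclusion, every inclusion-minimal ball with more than one point is
contained in the least element of `N` whenever `N ≠ ∅`, and all inclusion-minimal balls
with more than one point have the same cardinality), i.e. `X ∈ 𝔗`. -/
theorem stmt4 {X : Type} [Finite X] [Nonempty X] (d : X → X → ℝ)
    (hd : IsUltrametric d)
    (hinj : ∀ B₁ B₂ : Set X, IsBall d B₁ → IsBall d B₂ → B₁.Nontrivial →
      B₂.Nontrivial → setDiam d B₁ = setDiam d B₂ → B₁ = B₂) :
    (∀ (Y : Type) (_ : Finite Y) (_ : Nonempty Y) (ρ : Y → Y → ℝ),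
        IsUltrametric ρ →
        (∀ B₁ B₂ : Set Y, IsBall ρ B₁ → IsBall ρ B₂ → B₁.Nontrivial →
          B₂.Nontrivial → setDiam ρ B₁ = setDiam ρ B₂ → B₁ = B₂) →
        (∃ F : X → Y, Function.Bijective F ∧ IsBallPreserving d ρ F) →
        WeaklySimilar d ρ) ↔
      ((∀ B₁ ∈ strictlyContainingBalls d, ∀ B₂ ∈ strictlyContainingBalls d,
          B₁ ⊆ B₂ ∨ B₂ ⊆ B₁) ∧
        (∀ B₀ ∈ strictlyContainingBalls d,
          (∀ B ∈ strictlyContainingBalls d, B₀ ⊆ B) →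
          ∀ B ∈ minimalNontrivialBalls d, B ⊆ B₀) ∧
        (∀ B₁ ∈ minimalNontrivialBalls d, ∀ B₂ ∈ minimalNontrivialBalls d,
          B₁.ncard = B₂.ncard)) := by

  have hU := UM.U_of hd hinj
  rw [UM.cond_iff_H hd hU]
  constructor
  · intro hi
    apply UM.necessity hd hU
    intro ρ hρ hUρ hB
    refine hi X inferInstance inferInstance ρ hρ (UM.inj_of_U hρ hUρ)
      ⟨id, Function.bijective_id, fun B h => ?_, fun B h => ?_⟩
    · rw [Set.image_id]; exact (hB B).1 h
    · rw [Set.preimage_id]; exact (hB B).2 h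
  · intro hH Y _ _ ρ hρ hinjρ hF
    obtain ⟨F, hFb, hF1, hF2⟩ := hF
    have hUρ := UM.U_of hρ hinjρ
    let ρ' : X → X → ℝ := fun x y => ρ (F x) (F y)
    have hρ' : IsUltrametric ρ' :=
      ⟨⟨fun x y => hρ.1.1 _ _, fun x y => hρ.1.2.1 _ _, fun x y => by
        show ρ (F x) (F y) = 0 ↔ _
        rw [hρ.1.2.2, hFb.1.eq_iff]⟩, fun x y z => hρ.2 _ _ _⟩
    have hUρ' : UM.U ρ' := fun x y u v h h0 => hUρ _ _ _ _ h h0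
    have hball : ∀ B : Set X, IsBall d B ↔ IsBall ρ' B := by
      intro B
      constructor
      · intro h
        obtain ⟨t, r, hr, ht⟩ := hF1 B h
        obtain ⟨t, rfl⟩ := hFb.2 t
        refine ⟨t, r, hr, ?_⟩
        rw [← Set.preimage_image_eq B hFb.1, ht]
        rfl
      · rintro ⟨t, r, hr, rfl⟩
        exact hF2 {y | ρ y (F t) ≤ r} ⟨F t, r, hr, rfl⟩
    obtain ⟨Φ, f, h1, h2, h3, h4⟩ := UM.sufficiency hd hU hH hρ' hUρ' hball
    have hspec : spec ρ' = spec ρ := by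
      ext r
      constructor
      · rintro ⟨x, y, h⟩; exact ⟨F x, F y, h⟩
      · rintro ⟨x, y, h⟩
        obtain ⟨x, rfl⟩ := hFb.2 x
        obtain ⟨y, rfl⟩ := hFb.2 y
        exact ⟨x, y, h⟩
    exact ⟨F ∘ Φ, f, hFb.comp h1, hspec ▸ h2, h3, h4⟩
end

section
/- Let X and Y be finite nonempty semimetric spaces. If X and Y are weakly similar, then the Hasse diagrams of their balleans ordered by inclusion are isomorphic as directed graphs; that is, there exists a bijection F from the set of balls of X onto the set of balls of Y such that for all balls B₁, B₂ of X, B₂ covers B₁ in the inclusion order on the ballean of X if and only if F(B₂) covers F(B₁) in the inclusion order on the ballean of Y. -/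
theorem isBall_iff_pair {X : Type*} [Finite X] (d : X → X → ℝ) (hd : IsSemimetric d)
    (B : Set X) : IsBall d B ↔ ∃ t s, B = {x | d x t ≤ d s t} := by
  constructor
  · rintro ⟨t, r, hr, rfl⟩
    have hne : ({x | d x t ≤ r} : Set X).Nonempty := ⟨t, by
      have := (hd.2.2 t t).2 rfl
      simpa [this] using hr⟩
    obtain ⟨s, hs, hmax⟩ := Set.exists_max_image _ (fun x => d x t) (Set.toFinite _) hne
    refine ⟨t, s, ?_⟩
    ext x
    exact ⟨fun hx => hmax x hx, fun hx => show d x t ≤ r from le_trans (show d x t ≤ d s t from hx) hs⟩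
  · rintro ⟨t, s, rfl⟩
    exact ⟨t, d s t, hd.1 s t, rfl⟩

/-- If finite nonempty semimetric spaces `X` and `Y` are weakly similar,
then the Hasse diagrams of their balleans (ordered by inclusion) are isomorphic as directed
graphs: some bijection of the balleans preserves the covering relation in both directions. -/
theorem stmt5 {X Y : Type*} [Finite X] [Finite Y] [Nonempty X] [Nonempty Y]
    (d : X → X → ℝ) (ρ : Y → Y → ℝ) (hd : IsSemimetric d) (hρ : IsSemimetric ρ)
    (h : WeaklySimilar d ρ) :
    ∃ F : Set X → Set Y, Set.BijOn F {B | IsBall d B} {B | IsBall ρ B} ∧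
      ∀ B₁ B₂ : Set X, IsBall d B₁ → IsBall d B₂ →
        (BallCovers d B₁ B₂ ↔ BallCovers ρ (F B₁) (F B₂)) := by
  obtain ⟨Φ, f, hΦ, -, hmono, hf⟩ := h
  have key : ∀ x t s, ρ (Φ x) (Φ t) ≤ ρ (Φ s) (Φ t) ↔ d x t ≤ d s t := by
    intro x t s
    rw [← hf, ← hf]
    exact hmono.le_iff_le ⟨x, t, rfl⟩ ⟨s, t, rfl⟩
  have hpre : ∀ t s, Φ '' {x | d x t ≤ d s t} = {y | ρ y (Φ t) ≤ ρ (Φ s) (Φ t)} := by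
    intro t s
    ext y
    obtain ⟨x, rfl⟩ := hΦ.2 y
    rw [hΦ.1.mem_set_image]
    exact (key x t s).symm
  have hinj : Function.Injective (fun B : Set X => Φ '' B) := hΦ.1.image_injective
  have himg : ∀ B, IsBall d B → IsBall ρ (Φ '' B) := by
    intro B hB
    obtain ⟨t, s, rfl⟩ := (isBall_iff_pair d hd B).1 hB
    exact (isBall_iff_pair ρ hρ _).2 ⟨Φ t, Φ s, hpre t s⟩
  have hsurj : ∀ C, IsBall ρ C → ∃ B, IsBall d B ∧ Φ '' B = C := by
    intro C hC
    obtain ⟨t, s, rfl⟩ := (isBall_iff_pair ρ hρ C).1 hC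
    obtain ⟨t, rfl⟩ := hΦ.2 t
    obtain ⟨s, rfl⟩ := hΦ.2 s
    exact ⟨_, (isBall_iff_pair d hd _).2 ⟨t, s, rfl⟩, hpre t s⟩
  refine ⟨fun B => Φ '' B, ⟨himg, hinj.injOn, hsurj⟩, ?_⟩
  intro B₁ B₂ h₁ h₂
  have hsub : ∀ A B : Set X, Φ '' A ⊆ Φ '' B ↔ A ⊆ B :=
    fun A B => Set.image_subset_image_iff hΦ.1
  have hss : Φ '' B₁ ⊂ Φ '' B₂ ↔ B₁ ⊂ B₂ := by
    rw [ssubset_iff_subset_not_subset, ssubset_iff_subset_not_subset, hsub, hsub]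
  constructor
  · rintro ⟨-, -, hlt, hcov⟩
    refine ⟨himg _ h₁, himg _ h₂, hss.2 hlt, ?_⟩
    intro C hC h1 h2
    obtain ⟨B, hB, rfl⟩ := hsurj C hC
    rcases hcov B hB ((hsub _ _).1 h1) ((hsub _ _).1 h2) with rfl | rfl
    · exact Or.inl rfl
    · exact Or.inr rfl
  · rintro ⟨-, -, hlt, hcov⟩
    refine ⟨h₁, h₂, hss.1 hlt, ?_⟩
    intro B hB h1 h2
    rcases hcov _ (himg B hB) ((hsub _ _).2 h1) ((hsub _ _).2 h2) with h | h
    · exact Or.inl (hinj h)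
    · exact Or.inr (hinj h)
end

section
/- Let Φ : X → Y be a weak similarity between finite nonempty semimetric spaces (X,d) and (Y,ρ). Then for every ball B of X the image Φ(B) is a ball of Y, and the map B ↦ Φ(B) is a bijection from the ballean of X onto the ballean of Y satisfying B₁ ⊆ B₂ if and only if Φ(B₁) ⊆ Φ(B₂), for all balls B₁, B₂ of X (i.e., B ↦ Φ(B) is an order isomorphism of the balleans ordered by inclusion). -/
theorem ball_image_aux {X Y : Type*} [Finite X] (d : X → X → ℝ) (ρ : Y → Y → ℝ)
    (hd : IsSemimetric d) (hρ : IsSemimetric ρ) (Φ : X → Y) (hs : Function.Surjective Φ)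
    (hi : Function.Injective Φ)
    (h : ∀ x y z w, d x y ≤ d z w ↔ ρ (Φ x) (Φ y) ≤ ρ (Φ z) (Φ w))
    (B : Set X) (hB : IsBall d B) : IsBall ρ (Φ '' B) := by
  obtain ⟨t, r, hr, rfl⟩ := hB
  have ht : d t t = 0 := (hd.2.2 t t).2 rfl
  obtain ⟨x0, hx0, hmax⟩ := Set.exists_max_image {x | d x t ≤ r} (fun x => d x t)
    (Set.toFinite _) ⟨t, by simpa [ht] using hr⟩
  refine ⟨Φ t, ρ (Φ x0) (Φ t), hρ.1 _ _, ?_⟩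
  ext y
  obtain ⟨x, rfl⟩ := hs y
  rw [hi.mem_set_image, Set.mem_setOf_eq, Set.mem_setOf_eq, ← h]
  exact ⟨fun hx => hmax x hx, fun hx => hx.trans hx0⟩

/-- A weak similarity `Φ` maps balls to balls, and `B ↦ Φ '' B` is an order
isomorphism of the balleans ordered by inclusion. -/
theorem stmt6 {X Y : Type*} [Finite X] [Finite Y] [Nonempty X] [Nonempty Y]
    (d : X → X → ℝ) (ρ : Y → Y → ℝ) (hd : IsSemimetric d) (hρ : IsSemimetric ρ)
    (Φ : X → Y) (f : ℝ → ℝ) (h : IsWeakSimilarity d ρ Φ f) :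
    (∀ B : Set X, IsBall d B → IsBall ρ (Φ '' B)) ∧
    Set.BijOn (fun B : Set X => Φ '' B) {B | IsBall d B} {B | IsBall ρ B} ∧
    (∀ B₁ B₂ : Set X, IsBall d B₁ → IsBall d B₂ → (B₁ ⊆ B₂ ↔ Φ '' B₁ ⊆ Φ '' B₂)) := by
  obtain ⟨hb, -, hm, hf⟩ := h
  have key : ∀ x y z w, d x y ≤ d z w ↔ ρ (Φ x) (Φ y) ≤ ρ (Φ z) (Φ w) := by
    intro x y z w
    rw [← hf, ← hf]
    exact (hm.le_iff_le ⟨x, y, rfl⟩ ⟨z, w, rfl⟩).symm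
  have h1 := ball_image_aux d ρ hd hρ Φ hb.2 hb.1 key
  refine ⟨h1, ⟨h1, hb.1.image_injective.injOn, ?_⟩,
    fun B₁ B₂ _ _ => (Set.image_subset_image_iff hb.1).symm⟩
  intro B hB
  let e := Equiv.ofBijective Φ hb
  have he : ∀ y, Φ (e.symm y) = y := fun y => e.apply_symm_apply y
  have h2 := ball_image_aux ρ d hρ hd e.symm e.symm.surjective e.symm.injective
    (by intro x y z w; rw [key, he, he, he, he]) B hB
  refine ⟨e.symm '' B, h2, ?_⟩
  simp [Set.image_image, he]
end

section
/- Let Φ : X → Y be a weak similarity between finite nonempty semimetric spaces (X,d) and (Y,ρ) with scaling function f : Sp(X) → Sp(Y). Let t ∈ X, r ≥ 0, let B = B_r(t) = {x ∈ X : d(x,t) ≤ r}, and set r₀ = max{d(t,x) : x ∈ B}. Then the image of B under Φ is the ball of radius f(r₀) centered at Φ(t): Φ(B) = {y ∈ Y : ρ(y, Φ(t)) ≤ f(r₀)}. -/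
/-- If `Φ` is a weak similarity with scaling function `f`, `B = B_r(t)` and
`r₀ = max {d t x : x ∈ B}`, then `Φ(B)` is the ball of radius `f r₀` centered at `Φ t`. -/
theorem stmt7 {X Y : Type*} [Finite X] [Finite Y] [Nonempty X] [Nonempty Y]
    (d : X → X → ℝ) (ρ : Y → Y → ℝ) (hd : IsSemimetric d) (hρ : IsSemimetric ρ)
    (Φ : X → Y) (f : ℝ → ℝ) (h : IsWeakSimilarity d ρ Φ f)
    (t : X) (r : ℝ) (hr : 0 ≤ r) (B : Set X) (hB : B = {x | d x t ≤ r})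
    (r₀ : ℝ) (hr₀ : IsGreatest {s | ∃ x ∈ B, d t x = s} r₀) :
    Φ '' B = {y | ρ y (Φ t) ≤ f r₀} := by
  obtain ⟨hbij, -, hmono, hf⟩ := h
  subst hB
  obtain ⟨⟨z, hz, rfl⟩, hub⟩ := hr₀
  have hsymm := hd.2.1
  ext y
  obtain ⟨x, rfl⟩ := hbij.2 y
  rw [hbij.1.mem_set_image]
  simp only [Set.mem_setOf_eq] at hz ⊢
  rw [← hf x t, hmono.le_iff_le ⟨x, t, rfl⟩ ⟨t, z, rfl⟩]
  constructor
  · intro hx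
    rw [hsymm x t]
    exact hub ⟨x, hx, rfl⟩
  · intro hx
    rw [hsymm t z] at hx
    exact hx.trans hz
end

section
/- Let X and Y be finite nonempty semimetric spaces. Then every weak similarity Φ : X → Y is a ball-preserving bijection; that is, the image under Φ of every ball of X is a ball of Y, and the preimage under Φ of every ball of Y is a ball of X. -/
theorem exists_ball_center {X : Type*} [Finite X] (d : X → X → ℝ) (hd : IsSemimetric d)
    (t : X) (r : ℝ) (hr : 0 ≤ r) : ∃ m, ∀ x, d x t ≤ r ↔ d x t ≤ d m t := by
  have hne : ({x | d x t ≤ r} : Set X).Nonempty :=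
    ⟨t, by simpa [(hd.2.2 t t).2 rfl] using hr⟩
  obtain ⟨m, hm, hmax⟩ := Set.exists_max_image {x | d x t ≤ r} (fun x => d x t)
    (Set.toFinite _) hne
  exact ⟨m, fun x => ⟨fun hx => hmax x hx, fun hx => le_trans hx hm⟩⟩

/-- Every weak similarity between finite nonempty semimetric spaces is a
ball-preserving bijection. -/
theorem stmt8 {X Y : Type*} [Finite X] [Finite Y] [Nonempty X] [Nonempty Y]
    (d : X → X → ℝ) (ρ : Y → Y → ℝ) (hd : IsSemimetric d) (hρ : IsSemimetric ρ)
    (Φ : X → Y) (h : ∃ f : ℝ → ℝ, IsWeakSimilarity d ρ Φ f) :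
    Function.Bijective Φ ∧ IsBallPreserving d ρ Φ := by
  obtain ⟨f, hb, -, hmono, hf⟩ := h
  have key : ∀ x m t, ρ (Φ x) (Φ t) ≤ ρ (Φ m) (Φ t) ↔ d x t ≤ d m t := by
    intro x m t
    rw [← hf, ← hf]
    exact hmono.le_iff_le ⟨x, t, rfl⟩ ⟨m, t, rfl⟩
  refine ⟨hb, ?_, ?_⟩
  · rintro B ⟨t, r, hr, rfl⟩
    obtain ⟨m, hm⟩ := exists_ball_center d hd t r hr
    refine ⟨Φ t, ρ (Φ m) (Φ t), hρ.1 _ _, ?_⟩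
    ext y
    obtain ⟨x, rfl⟩ := hb.2 y
    rw [hb.1.mem_set_image, Set.mem_setOf_eq, Set.mem_setOf_eq, key, hm]
  · rintro B ⟨t, r, hr, rfl⟩
    obtain ⟨m, hm⟩ := exists_ball_center ρ hρ t r hr
    obtain ⟨t, rfl⟩ := hb.2 t
    obtain ⟨m, rfl⟩ := hb.2 m
    refine ⟨t, d m t, hd.1 _ _, ?_⟩
    ext x
    rw [Set.mem_preimage, Set.mem_setOf_eq, Set.mem_setOf_eq, hm, key]
end

section
/- Let X and Y be finite nonempty semimetric spaces. Then the Hasse diagrams of their balleans ordered by inclusion are isomorphic as directed graphs (i.e., there exists a bijection F from the balls of X onto the balls of Y such that for all balls B₁, B₂ of X, B₂ covers B₁ in the inclusion order on the ballean of X if and only if F(B₂) covers F(B₁) in the inclusion order on the ballean of Y) if and only if there exists a bijective ball-preserving mapping f : X → Y. -/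
theorem isBall_singleton {X : Type*} {d : X → X → ℝ} (hd : IsSemimetric d) (x : X) :
    IsBall d {x} := by
  refine ⟨x, 0, le_rfl, ?_⟩
  ext y
  simp only [Set.mem_singleton_iff, Set.mem_setOf_eq]
  rw [← hd.2.2 y x]
  exact ⟨fun h => h.le, fun h => le_antisymm h (hd.1 _ _)⟩

theorem isBall_nonempty {X : Type*} {d : X → X → ℝ} (hd : IsSemimetric d) {B : Set X}
    (h : IsBall d B) : B.Nonempty := by
  obtain ⟨t, r, hr, rfl⟩ := h
  exact ⟨t, by simpa [(hd.2.2 t t).2 rfl] using hr⟩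

theorem ballCovers_iff_covBy {X : Type*} {d : X → X → ℝ} (a b : {B : Set X // IsBall d B}) :
    BallCovers d a.1 b.1 ↔ a ⋖ b := by
  constructor
  · rintro ⟨_, _, h, h2⟩
    refine ⟨h, fun c hac hcb => ?_⟩
    rcases h2 c.1 c.2 hac.le hcb.le with h3 | h3
    · exact hac.ne (Subtype.ext h3.symm)
    · exact hcb.ne (Subtype.ext h3)
  · rintro ⟨h, h2⟩
    refine ⟨a.2, b.2, h, fun B hB h3 h4 => ?_⟩
    by_contra! hne
    have h5 : a < (⟨B, hB⟩ : {B : Set X // IsBall d B}) :=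
      lt_of_le_of_ne h3 (fun h => hne.1 (congrArg Subtype.val h).symm)
    have h6 : (⟨B, hB⟩ : {B : Set X // IsBall d B}) < b :=
      lt_of_le_of_ne h4 (fun h => hne.2 (congrArg Subtype.val h))
    exact h2 h5 h6

theorem le_of_covBy_imp {P Q : Type*} [PartialOrder P] [PartialOrder Q] [Finite P]
    (e : P → Q) (h : ∀ a b, a ⋖ b → e a ⋖ e b) {a b : P} (hab : a ≤ b) : e a ≤ e b := by
  classical
  have := Fintype.ofFinite P
  letI : DecidableRel ((· ≤ ·) : P → P → Prop) := Classical.decRel _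
  letI : DecidableRel ((· < ·) : P → P → Prop) := Classical.decRel _
  letI : LocallyFiniteOrder P := Fintype.toLocallyFiniteOrder
  rw [le_iff_reflTransGen_covBy] at hab
  induction hab with
  | refl => exact le_rfl
  | tail _ h2 ih => exact ih.trans (h _ _ h2).le

theorem isMin_iff_singleton {X : Type*} {d : X → X → ℝ} (hd : IsSemimetric d)
    (a : {B : Set X // IsBall d B}) : IsMin a ↔ ∃ x, a.1 = {x} := by
  constructor
  · intro h
    obtain ⟨x, hx⟩ := isBall_nonempty hd a.2
    have hle : (⟨{x}, isBall_singleton hd x⟩ : {B : Set X // IsBall d B}) ≤ a :=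
      Set.singleton_subset_iff.2 hx
    exact ⟨x, Set.Subset.antisymm (h hle) hle⟩
  · rintro ⟨x, hx⟩ b hb
    have hb' : b.1 ⊆ {x} := hx ▸ hb
    obtain ⟨y, hy⟩ := isBall_nonempty hd b.2
    have hyx : y = x := hb' hy
    change a.1 ⊆ b.1
    rw [hx, Set.singleton_subset_iff, ← hyx]
    exact hy

/-- For finite nonempty semimetric spaces `X` and `Y`, the Hasse diagrams
of their balleans are isomorphic as directed graphs iff there exists a bijective
ball-preserving mapping `X → Y`. -/
theorem stmt9 {X Y : Type*} [Finite X] [Finite Y] [Nonempty X] [Nonempty Y]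
    (d : X → X → ℝ) (ρ : Y → Y → ℝ) (hd : IsSemimetric d) (hρ : IsSemimetric ρ) :
    (∃ F : Set X → Set Y, Set.BijOn F {B | IsBall d B} {B | IsBall ρ B} ∧
        ∀ B₁ B₂ : Set X, IsBall d B₁ → IsBall d B₂ →
          (BallCovers d B₁ B₂ ↔ BallCovers ρ (F B₁) (F B₂))) ↔
      (∃ g : X → Y, Function.Bijective g ∧ IsBallPreserving d ρ g) := by
  constructor
  · rintro ⟨F, hF, hcov⟩
    let e0 : {B : Set X // IsBall d B} ≃ {B : Set Y // IsBall ρ B} := hF.equiv F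
    have he0 : ∀ a, (e0 a).1 = F a.1 := fun a => rfl
    have hc : ∀ a b, a ⋖ b ↔ e0 a ⋖ e0 b := fun a b => by
      rw [← ballCovers_iff_covBy, ← ballCovers_iff_covBy, he0, he0]
      exact hcov _ _ a.2 b.2
    let e : {B : Set X // IsBall d B} ≃o {B : Set Y // IsBall ρ B} :=
      { e0 with
        map_rel_iff' := by
          intro a b
          refine ⟨fun h => ?_, fun h => le_of_covBy_imp e0 (fun a b => (hc a b).1) h⟩
          have := le_of_covBy_imp e0.symm (fun a b hab => (hc _ _).2 (by simpa using hab)) h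
          simpa using this }
    have hex : ∀ x : X, ∃ y : Y, (e ⟨{x}, isBall_singleton hd x⟩).1 = {y} := fun x =>
      (isMin_iff_singleton hρ _).1 ((e.isMin_apply).2 ((isMin_iff_singleton hd _).2 ⟨x, rfl⟩))
    choose g hg using hex
    have hginj : Function.Injective g := by
      intro x x' h
      have h1 : e ⟨{x}, isBall_singleton hd x⟩ = e ⟨{x'}, isBall_singleton hd x'⟩ :=
        Subtype.ext (by rw [hg, hg, h])
      have h2 := congrArg Subtype.val (e.injective h1)
      exact Set.singleton_injective h2
    have hgsurj : Function.Surjective g := by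
      intro y
      obtain ⟨a, ha⟩ := e.surjective ⟨{y}, isBall_singleton hρ y⟩
      have hm : IsMin a := e.isMin_apply.1 ((isMin_iff_singleton hρ _).2 ⟨y, by rw [ha]⟩)
      obtain ⟨x, hx⟩ := (isMin_iff_singleton hd _).1 hm
      have hax : a = ⟨{x}, isBall_singleton hd x⟩ := Subtype.ext hx
      refine ⟨x, Set.singleton_injective ?_⟩
      rw [← hg, ← hax, ha]
    have hmem : ∀ x a, x ∈ a.1 ↔ g x ∈ (e a).1 := by
      intro x a
      rw [← Set.singleton_subset_iff, ← Set.singleton_subset_iff (a := g x), ← hg]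
      exact (e.le_iff_le (x := ⟨{x}, isBall_singleton hd x⟩) (y := a)).symm
    have hpre : ∀ a, g ⁻¹' (e a).1 = a.1 := fun a => Set.ext fun x => (hmem x a).symm
    refine ⟨g, ⟨hginj, hgsurj⟩, fun B hB => ?_, fun B hB => ?_⟩
    · have h := hpre ⟨B, hB⟩
      change g ⁻¹' _ = B at h
      rw [← h, Set.image_preimage_eq _ hgsurj]
      exact (e _).2
    · obtain ⟨a, ha⟩ := e.surjective ⟨B, hB⟩
      have h := hpre a
      rw [ha] at h
      change g ⁻¹' B = _ at h
      rw [h]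
      exact a.2
  · rintro ⟨g, hg, him, hpre⟩
    refine ⟨fun B => g '' B, ⟨fun B hB => him B hB, hg.1.image_injective.injOn, fun B hB =>
      ⟨g ⁻¹' B, hpre B hB, Set.image_preimage_eq _ hg.2⟩⟩, ?_⟩
    intro B₁ B₂ h₁ h₂
    have hss : g '' B₁ ⊂ g '' B₂ ↔ B₁ ⊂ B₂ := by
      rw [ssubset_iff_subset_not_subset, ssubset_iff_subset_not_subset,
        Set.image_subset_image_iff hg.1, Set.image_subset_image_iff hg.1]
    constructor
    · rintro ⟨_, _, h, h'⟩
      refine ⟨him _ h₁, him _ h₂, hss.2 h, fun B hB hb1 hb2 => ?_⟩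
      have hBe := Set.image_preimage_eq B hg.2
      rw [← hBe] at hb1 hb2 ⊢
      rw [Set.image_subset_image_iff hg.1] at hb1 hb2
      exact (h' _ (hpre B hB) hb1 hb2).imp (congrArg _) (congrArg _)
    · rintro ⟨_, _, h, h'⟩
      refine ⟨h₁, h₂, hss.1 h, fun B hB hb1 hb2 => ?_⟩
      exact (h' _ (him B hB) (Set.image_mono hb1) (Set.image_mono hb2)).imp
        (fun h => hg.1.image_injective h) (fun h => hg.1.image_injective h)
end

section
/- Let X and Y be finite nonempty semimetric spaces. If X and Y are weakly similar, then there exists a bijective ball-preserving mapping f : X → Y. -/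
/-- In a finite semimetric space the radius of a ball may be taken to be an attained distance. -/
theorem ball_attained {X : Type*} [Finite X] (d : X → X → ℝ) (hd : IsSemimetric d)
    (t : X) (r : ℝ) (hr : 0 ≤ r) : ∃ m, {x | d x t ≤ r} = {x | d x t ≤ d m t} := by
  have ht : d t t ≤ r := by rw [(hd.2.2 t t).2 rfl]; exact hr
  obtain ⟨m, hm, hmax⟩ := Set.exists_max_image {x | d x t ≤ r} (fun x => d x t)
    (Set.toFinite _) ⟨t, ht⟩
  refine ⟨m, ?_⟩
  ext x
  simp only [Set.mem_setOf_eq] at hm ⊢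
  exact ⟨fun hx => hmax x hx, fun hx => le_trans hx hm⟩

/-- If finite nonempty semimetric spaces `X` and `Y` are weakly similar,
then there exists a bijective ball-preserving mapping `X → Y`. -/
theorem stmt10 {X Y : Type*} [Finite X] [Finite Y] [Nonempty X] [Nonempty Y]
    (d : X → X → ℝ) (ρ : Y → Y → ℝ) (hd : IsSemimetric d) (hρ : IsSemimetric ρ)
    (h : WeaklySimilar d ρ) :
    ∃ g : X → Y, Function.Bijective g ∧ IsBallPreserving d ρ g := by
  obtain ⟨Φ, f, hΦ, -, hmono, hf⟩ := h
  have key : ∀ x y z w, ρ (Φ x) (Φ y) ≤ ρ (Φ z) (Φ w) ↔ d x y ≤ d z w := by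
    intro x y z w
    rw [← hf, ← hf]
    exact hmono.le_iff_le ⟨x, y, rfl⟩ ⟨z, w, rfl⟩
  refine ⟨Φ, hΦ, ?_, ?_⟩
  · rintro B ⟨t, r, hr, rfl⟩
    obtain ⟨m, hm⟩ := ball_attained d hd t r hr
    rw [hm]
    refine ⟨Φ t, ρ (Φ m) (Φ t), hρ.1 _ _, ?_⟩
    ext y
    obtain ⟨x, rfl⟩ := hΦ.2 y
    rw [hΦ.1.mem_set_image]
    exact (key x t m t).symm
  · rintro B ⟨t, r, hr, rfl⟩
    obtain ⟨m, hm⟩ := ball_attained ρ hρ t r hr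
    rw [hm]
    obtain ⟨t, rfl⟩ := hΦ.2 t
    obtain ⟨m, rfl⟩ := hΦ.2 m
    refine ⟨t, d m t, hd.1 _ _, ?_⟩
    ext x
    exact key x t m t
end
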